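/- arXiv:2504.19859 — 2 statements merged into one kernel-verified Lean document; each statement's English description precedes it below -/
import Mathlib

section
/- Let w : [0,T] × ℝ × [0,∞) → ℝ be continuous, C^{1,1,1} on [0,T) × ℝ × [0,∞), C^{1,2} on [0,T) × ℝ × (0,∞), with |w(t,x,y)| ≤ C(1 + |x|^L + y^L) uniformly in t, satisfying (∂_t − ℒ)w = 0 on (0,T] × ℝ × (0,∞) (forward time), the boundary equation ∂_t w(t,x,0) − c∂_x w(t,x,0) − a∂_y w(t,x,0) = 0 for t ∈ (0,T], and w(0,x,y) = 0. Then w ≡ 0. -/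
/-!
Uniqueness follows from a maximum principle with a polynomial barrier.

Put `h = (1 + x² + y²)ⁿ` with `n = L + 2`. The coefficients of `Lop` grow at most linearly on
`y ≥ 0`, so `Lop h < M h` for some constant `M`, and `φ = ε exp(M t) h` is a strict supersolution
which dominates the growth of `w` at infinity (`Lop_barrier_lt`, `bounded_of_barrier_lt`). If
`w - φ` were positive somewhere before time `T`, it would have a positive maximum at some `t > 0`
over a large box, away from the artificial faces of the box (`le_barrier`). When `y > 0` there, the
gradient in `(x, y)` vanishes and the Hessian is nonpositive, so `Lop (w - φ) ≤ 0`, while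
`∂ₜ(w - φ) ≥ 0`: this contradicts strictness. When `y = 0`, the `x`-derivative of `w - φ` vanishes,
`∂_y w ≤ 0` and `∂ₜ(w - φ) ≥ 0`, which contradicts the boundary equation because `a > 0`.
Letting `ε → 0` gives `w ≤ 0`; the same argument for `-w` gives equality for `t < T`, and continuity covers `t = T`.
-/

open Set

/-- The degenerate log-Heston operator
`ℒ = (y/2)(λ²∂²_x + 2ρλσ∂_x∂_y + σ²∂²_y) + (c+dy)∂_x + (a−by)∂_y`
applied to a function `v` of `(x,y)`. -/
noncomputable def Lop (a b c d lam sig ρ : ℝ) (v : ℝ → ℝ → ℝ) (x y : ℝ) : ℝ :=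
  y / 2 * (lam ^ 2 * deriv (fun x' => deriv (fun x'' => v x'' y) x') x
      + 2 * ρ * lam * sig * deriv (fun x' => deriv (fun y' => v x' y') y) x
      + sig ^ 2 * deriv (fun y' => deriv (fun y'' => v x y'') y') y)
    + (c + d * y) * deriv (fun x' => v x' y) x
    + (a - b * y) * deriv (fun y' => v x y') y

open scoped Topology

/-! ### The operator through Fréchet derivatives -/

lemma deriv_line_fst {F : ℝ × ℝ → ℝ} {x y : ℝ} (h : DifferentiableAt ℝ F (x, y)) :
    deriv (fun x' => F (x', y)) x = fderiv ℝ F (x, y) (1, 0) := by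
  have hl : HasDerivAt (fun x' : ℝ => (x', y)) ((1 : ℝ), (0 : ℝ)) x :=
    (hasDerivAt_id x).prodMk (hasDerivAt_const x y)
  exact (h.hasFDerivAt.comp_hasDerivAt x hl).deriv

lemma deriv_line_snd {F : ℝ × ℝ → ℝ} {x y : ℝ} (h : DifferentiableAt ℝ F (x, y)) :
    deriv (fun y' => F (x, y')) y = fderiv ℝ F (x, y) (0, 1) := by
  have hl : HasDerivAt (fun y' : ℝ => (x, y')) ((0 : ℝ), (1 : ℝ)) y :=
    (hasDerivAt_const y x).prodMk (hasDerivAt_id y)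
  exact (h.hasFDerivAt.comp_hasDerivAt y hl).deriv

lemma differentiableAt_eventually {F : ℝ × ℝ → ℝ} {p : ℝ × ℝ} (h : ContDiffAt ℝ 2 F p) :
    ∀ᶠ q in 𝓝 p, DifferentiableAt ℝ F q := by
  filter_upwards [h.eventually (by simp)] with q hq
  exact hq.differentiableAt (by simp)

lemma hasDerivAt_apply_vec {A : ℝ → (ℝ × ℝ →L[ℝ] ℝ)} {A' : ℝ × ℝ →L[ℝ] ℝ} {s : ℝ}
    (h : HasDerivAt A A' s) (v : ℝ × ℝ) : HasDerivAt (fun r => A r v) (A' v) s :=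
  (ContinuousLinearMap.apply ℝ ℝ v).hasFDerivAt.comp_hasDerivAt s h

lemma deriv_fderiv_line {F : ℝ × ℝ → ℝ} {γ : ℝ → ℝ × ℝ} {γ' : ℝ × ℝ} {s : ℝ}
    (h : DifferentiableAt ℝ (fderiv ℝ F) (γ s)) (hγ : HasDerivAt γ γ' s) (v : ℝ × ℝ) :
    deriv (fun r => fderiv ℝ F (γ r) v) s = fderiv ℝ (fderiv ℝ F) (γ s) γ' v := by
  have h1 : HasDerivAt (fun r => fderiv ℝ F (γ r)) (fderiv ℝ (fderiv ℝ F) (γ s) γ') s :=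
    h.hasFDerivAt.comp_hasDerivAt s hγ
  exact (hasDerivAt_apply_vec h1 v).deriv

lemma differentiableAt_fderiv {F : ℝ × ℝ → ℝ} {p : ℝ × ℝ} (h : ContDiffAt ℝ 2 F p) :
    DifferentiableAt ℝ (fderiv ℝ F) p :=
  (h.fderiv_right (m := 1) (by norm_num)).differentiableAt (by simp)

/-- At a point where `F` is `C²`, the iterated partial derivatives in `Lop` are entries of the
second Fréchet derivative. -/
lemma Lop_eq_fderiv (a b c d lam sig ρ : ℝ) {F : ℝ × ℝ → ℝ} {x y : ℝ}
    (h : ContDiffAt ℝ 2 F (x, y)) :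
    Lop a b c d lam sig ρ (fun x' y' => F (x', y')) x y =
      y / 2 * (lam ^ 2 * fderiv ℝ (fderiv ℝ F) (x, y) (1, 0) (1, 0)
        + 2 * ρ * lam * sig * fderiv ℝ (fderiv ℝ F) (x, y) (1, 0) (0, 1)
        + sig ^ 2 * fderiv ℝ (fderiv ℝ F) (x, y) (0, 1) (0, 1))
      + (c + d * y) * fderiv ℝ F (x, y) (1, 0) + (a - b * y) * fderiv ℝ F (x, y) (0, 1) := by
  have hev := differentiableAt_eventually h
  have hD := differentiableAt_fderiv h
  have hlx : HasDerivAt (fun x' : ℝ => (x', y)) ((1 : ℝ), (0 : ℝ)) x :=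
    (hasDerivAt_id x).prodMk (hasDerivAt_const x y)
  have hly : HasDerivAt (fun y' : ℝ => (x, y')) ((0 : ℝ), (1 : ℝ)) y :=
    (hasDerivAt_const y x).prodMk (hasDerivAt_id y)
  have hex : ∀ᶠ x' in 𝓝 x, DifferentiableAt ℝ F (x', y) :=
    hlx.continuousAt.eventually hev
  have hey : ∀ᶠ y' in 𝓝 y, DifferentiableAt ℝ F (x, y') :=
    hly.continuousAt.eventually hev
  have hDx : ∀ v : ℝ × ℝ, deriv (fun x' => fderiv ℝ F (x', y) v) x
      = fderiv ℝ (fderiv ℝ F) (x, y) (1, 0) v := fun v =>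
    deriv_fderiv_line (γ := fun x' => (x', y)) hD hlx v
  have hDy : ∀ v : ℝ × ℝ, deriv (fun y' => fderiv ℝ F (x, y') v) y
      = fderiv ℝ (fderiv ℝ F) (x, y) (0, 1) v := fun v =>
    deriv_fderiv_line (γ := fun y' => (x, y')) hD hly v
  have e1 : deriv (fun x' => deriv (fun x'' => F (x'', y)) x') x
      = fderiv ℝ (fderiv ℝ F) (x, y) (1, 0) (1, 0) := by
    rw [← hDx]
    exact Filter.EventuallyEq.deriv_eq (hex.mono fun x' h' => deriv_line_fst h')
  have e2 : deriv (fun x' => deriv (fun y' => F (x', y')) y) x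
      = fderiv ℝ (fderiv ℝ F) (x, y) (1, 0) (0, 1) := by
    rw [← hDx]
    exact Filter.EventuallyEq.deriv_eq (hex.mono fun x' h' => deriv_line_snd h')
  have e3 : deriv (fun y' => deriv (fun y'' => F (x, y'')) y') y
      = fderiv ℝ (fderiv ℝ F) (x, y) (0, 1) (0, 1) := by
    rw [← hDy]
    exact Filter.EventuallyEq.deriv_eq (hey.mono fun y' h' => deriv_line_snd h')
  simp only [Lop]
  rw [e1, e2, e3, deriv_line_fst hev.self_of_nhds, deriv_line_snd hev.self_of_nhds]

lemma Lop_sub (a b c d lam sig ρ : ℝ) {F G : ℝ × ℝ → ℝ} {x y : ℝ}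
    (hF : ContDiffAt ℝ 2 F (x, y)) (hG : ContDiffAt ℝ 2 G (x, y)) :
    Lop a b c d lam sig ρ (fun x' y' => F (x', y') - G (x', y')) x y =
      Lop a b c d lam sig ρ (fun x' y' => F (x', y')) x y
        - Lop a b c d lam sig ρ (fun x' y' => G (x', y')) x y := by
  have e1 : fderiv ℝ (fun p => F p - G p) (x, y) = fderiv ℝ F (x, y) - fderiv ℝ G (x, y) :=
    fderiv_fun_sub (differentiableAt_eventually hF).self_of_nhds
      (differentiableAt_eventually hG).self_of_nhds
  have e2 : fderiv ℝ (fderiv ℝ (fun p => F p - G p)) (x, y)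
      = fderiv ℝ (fderiv ℝ F) (x, y) - fderiv ℝ (fderiv ℝ G) (x, y) := by
    rw [← fderiv_fun_sub (differentiableAt_fderiv hF) (differentiableAt_fderiv hG)]
    apply Filter.EventuallyEq.fderiv_eq
    filter_upwards [differentiableAt_eventually hF, differentiableAt_eventually hG] with q h1 h2
    exact fderiv_fun_sub h1 h2
  rw [Lop_eq_fderiv a b c d lam sig ρ hF, Lop_eq_fderiv a b c d lam sig ρ hG]
  refine (Lop_eq_fderiv a b c d lam sig ρ (F := fun p => F p - G p) (hF.sub hG)).trans ?_
  rw [e1, e2]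
  simp only [sub_apply]
  ring

lemma Lop_neg (a b c d lam sig ρ : ℝ) (v : ℝ → ℝ → ℝ) (x y : ℝ) :
    Lop a b c d lam sig ρ (fun x' y' => -v x' y') x y = -Lop a b c d lam sig ρ v x y := by
  simp only [Lop, deriv.fun_neg]
  ring

/-! ### The operator at a local maximum -/

/-- A strictly positive second derivative would make the point a local minimum as well, so the
function would be locally constant. -/
lemma deriv_deriv_nonpos_of_isLocalMax {u : ℝ → ℝ} {s : ℝ} (h : IsLocalMax u s)
    (hc : ContinuousAt u s) : deriv (deriv u) s ≤ 0 := by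
  by_contra! hpos
  have hmin : IsLocalMin u s := isLocalMin_of_deriv_deriv_pos hpos h.deriv_eq_zero hc
  have he : u =ᶠ[𝓝 s] fun _ => u s := by
    filter_upwards [h, hmin] with r h1 h2
    exact le_antisymm h1 h2
  have : deriv (deriv u) s = 0 := by
    rw [he.deriv.deriv_eq]
    simp
  linarith

lemma fderiv_fderiv_nonpos_of_isLocalMax {F : ℝ × ℝ → ℝ} {p : ℝ × ℝ} (h : ContDiffAt ℝ 2 F p)
    (hm : IsLocalMax F p) (v : ℝ × ℝ) : fderiv ℝ (fderiv ℝ F) p v v ≤ 0 := by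
  have hl : ∀ s : ℝ, HasDerivAt (fun s : ℝ => p + s • v) v s := fun s => by
    simpa using ((hasDerivAt_id s).smul_const v).const_add p
  have h0 : p + (0 : ℝ) • v = p := by simp
  have hlim : Filter.Tendsto (fun s : ℝ => p + s • v) (𝓝 0) (𝓝 p) := by
    simpa [h0] using (hl 0).continuousAt.tendsto
  have hD := differentiableAt_fderiv h
  have hmu : IsLocalMax (fun s : ℝ => F (p + s • v)) 0 := by
    have := hlim.eventually hm
    simpa [IsLocalMax, IsMaxFilter] using this
  have hcu : ContinuousAt (fun s : ℝ => F (p + s • v)) 0 := by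
    have : Filter.Tendsto (fun s : ℝ => F (p + s • v)) (𝓝 0) (𝓝 (F p)) :=
      h.continuousAt.tendsto.comp hlim
    simpa [ContinuousAt] using this
  have hu1 : deriv (fun s : ℝ => F (p + s • v)) =ᶠ[𝓝 0] fun s => fderiv ℝ F (p + s • v) v := by
    filter_upwards [hlim.eventually (differentiableAt_eventually h)] with s hs
    exact (hs.hasFDerivAt.comp_hasDerivAt s (hl s)).deriv
  have hD0 : DifferentiableAt ℝ (fderiv ℝ F) (p + (0 : ℝ) • v) := by rwa [h0]
  have hu2 : deriv (deriv fun s : ℝ => F (p + s • v)) 0 = fderiv ℝ (fderiv ℝ F) p v v := by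
    rw [hu1.deriv_eq, deriv_fderiv_line (γ := fun s : ℝ => p + s • v) hD0 (hl 0) v, h0]
  rw [← hu2]
  exact deriv_deriv_nonpos_of_isLocalMax hmu hcu

/-- Ellipticity: the second-order part of `Lop` is `y / 2` times the sum of the second derivative
along `(lam, ρ sig)` and `(1 - ρ²) sig²` times the one along `(0, 1)`. -/
lemma Lop_nonpos_of_isLocalMax (a b c d lam sig ρ : ℝ) (hρ : -1 < ρ ∧ ρ < 1)
    {F : ℝ × ℝ → ℝ} {x y : ℝ} (hy : 0 ≤ y)
    (h : ContDiffAt ℝ 2 F (x, y)) (hm : IsLocalMax F (x, y)) :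
    Lop a b c d lam sig ρ (fun x' y' => F (x', y')) x y ≤ 0 := by
  rw [Lop_eq_fderiv a b c d lam sig ρ h, hm.fderiv_eq_zero]
  have h1 := fderiv_fderiv_nonpos_of_isLocalMax h hm (lam, ρ * sig)
  have h2 := fderiv_fderiv_nonpos_of_isLocalMax h hm (0, 1)
  have hsymm : fderiv ℝ (fderiv ℝ F) (x, y) (0, 1) (1, 0)
      = fderiv ℝ (fderiv ℝ F) (x, y) (1, 0) (0, 1) :=
    (h.isSymmSndFDerivAt (by simp)).eq _ _
  have hv : ((lam, ρ * sig) : ℝ × ℝ) = lam • (1, 0) + (ρ * sig) • (0, 1) := by simp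
  rw [hv] at h1
  simp only [map_add, map_smul, add_apply, smul_apply,
    smul_eq_mul, hsymm] at h1
  have h3 : (1 - ρ ^ 2) * sig ^ 2 * fderiv ℝ (fderiv ℝ F) (x, y) (0, 1) (0, 1) ≤ 0 :=
    mul_nonpos_of_nonneg_of_nonpos (mul_nonneg (by nlinarith [hρ.1, hρ.2]) (sq_nonneg _)) h2
  simp only [zero_apply, mul_zero, add_zero]
  exact mul_nonpos_of_nonneg_of_nonpos (by linarith) (by nlinarith [h1, h3])

/-! ### The barrier -/

/-- The spatial barrier `(1 + x² + y²)ⁿ` with `n = m + 2`. -/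
def barrier (m : ℕ) (x y : ℝ) : ℝ := (1 + x ^ 2 + y ^ 2) ^ (m + 2)

lemma barrier_pos (m : ℕ) (x y : ℝ) : 0 < barrier m x y := by
  unfold barrier; positivity

lemma contDiff_barrier (m : ℕ) (K : ℝ) :
    ContDiff ℝ 2 (fun p : ℝ × ℝ => K * barrier m p.1 p.2) := by
  unfold barrier; fun_prop

lemma hasDerivAt_pow_fst (k : ℕ) (x y : ℝ) :
    HasDerivAt (fun x' : ℝ => (1 + x' ^ 2 + y ^ 2) ^ (k + 1))
      ((k + 1) * (1 + x ^ 2 + y ^ 2) ^ k * (2 * x)) x := by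
  have h : HasDerivAt (fun x' : ℝ => 1 + x' ^ 2 + y ^ 2) (2 * x) x := by
    simpa using ((hasDerivAt_pow 2 x).const_add 1).add_const (y ^ 2)
  simpa using h.fun_pow (k + 1)

lemma hasDerivAt_pow_snd (k : ℕ) (x y : ℝ) :
    HasDerivAt (fun y' : ℝ => (1 + x ^ 2 + y' ^ 2) ^ (k + 1))
      ((k + 1) * (1 + x ^ 2 + y ^ 2) ^ k * (2 * y)) y := by
  have h : HasDerivAt (fun y' : ℝ => 1 + x ^ 2 + y' ^ 2) (2 * y) y := by
    simpa using (hasDerivAt_pow 2 y).const_add (1 + x ^ 2)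
  simpa using h.fun_pow (k + 1)

lemma hasDerivAt_barrier_fst (m : ℕ) (K x y : ℝ) :
    HasDerivAt (fun x' => K * barrier m x' y)
      (K * ((m + 2) * (1 + x ^ 2 + y ^ 2) ^ (m + 1) * (2 * x))) x := by
  refine ((hasDerivAt_pow_fst (m + 1) x y).const_mul K).congr_deriv ?_
  push_cast; ring

lemma hasDerivAt_barrier_snd (m : ℕ) (K x y : ℝ) :
    HasDerivAt (fun y' => K * barrier m x y')
      (K * ((m + 2) * (1 + x ^ 2 + y ^ 2) ^ (m + 1) * (2 * y))) y := by
  refine ((hasDerivAt_pow_snd (m + 1) x y).const_mul K).congr_deriv ?_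
  push_cast; ring

lemma Lop_barrier (a b c d lam sig ρ : ℝ) (m : ℕ) (K x y : ℝ) :
    Lop a b c d lam sig ρ (fun x' y' => K * barrier m x' y') x y =
      K * (1 + x ^ 2 + y ^ 2) ^ m * (m + 2) *
       (y * (lam ^ 2 * ((1 + x ^ 2 + y ^ 2) + 2 * (m + 1) * x ^ 2)
          + 4 * (m + 1) * ρ * lam * sig * (x * y)
          + sig ^ 2 * ((1 + x ^ 2 + y ^ 2) + 2 * (m + 1) * y ^ 2))
        + 2 * (1 + x ^ 2 + y ^ 2) * ((c + d * y) * x + (a - b * y) * y)) := by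
  have e1 : ∀ x y, deriv (fun x' => K * barrier m x' y) x
      = K * ((m + 2) * (1 + x ^ 2 + y ^ 2) ^ (m + 1) * (2 * x)) :=
    fun x y => (hasDerivAt_barrier_fst m K x y).deriv
  have e2 : ∀ x y, deriv (fun y' => K * barrier m x y') y
      = K * ((m + 2) * (1 + x ^ 2 + y ^ 2) ^ (m + 1) * (2 * y)) :=
    fun x y => (hasDerivAt_barrier_snd m K x y).deriv
  have hx := hasDerivAt_pow_fst m x y
  have hy := hasDerivAt_pow_snd m x y
  have e3 : deriv (fun x' => K * ((m + 2) * (1 + x' ^ 2 + y ^ 2) ^ (m + 1) * (2 * x'))) x = _ :=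
    (((hx.const_mul ((m : ℝ) + 2)).fun_mul ((hasDerivAt_id' x).const_mul 2)).const_mul K).deriv
  have e4 : deriv (fun x' => K * ((m + 2) * (1 + x' ^ 2 + y ^ 2) ^ (m + 1) * (2 * y))) x = _ :=
    (((hx.const_mul ((m : ℝ) + 2)).mul_const (2 * y)).const_mul K).deriv
  have e5 : deriv (fun y' => K * ((m + 2) * (1 + x ^ 2 + y' ^ 2) ^ (m + 1) * (2 * y'))) y = _ :=
    (((hy.const_mul ((m : ℝ) + 2)).fun_mul ((hasDerivAt_id' y).const_mul 2)).const_mul K).deriv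
  simp only [Lop, e1, e2]
  rw [e3, e4, e5]
  ring

/-- The growth rate in time for which the barrier is a strict supersolution. -/
def rate (a b c d lam sig : ℝ) (m : ℕ) : ℝ :=
  (m + 2) * ((2 * m + 3) * (lam ^ 2 + sig ^ 2) + 4 * (m + 1) * |lam * sig|
    + 2 * (|a| + |b| + |c| + |d|)) + 1

lemma Lop_barrier_lt (a b c d lam sig ρ : ℝ) (hρ : -1 < ρ ∧ ρ < 1) (m : ℕ) {K x y : ℝ}
    (hK : 0 < K) (hy : 0 ≤ y) :
    Lop a b c d lam sig ρ (fun x' y' => K * barrier m x' y') x y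
      < K * (rate a b c d lam sig m * barrier m x y) := by
  rw [Lop_barrier]
  set s := 1 + x ^ 2 + y ^ 2 with hs
  have hs1 : 1 ≤ s := by nlinarith [sq_nonneg x, sq_nonneg y]
  have hys : y ≤ s := by nlinarith [sq_nonneg x, sq_nonneg (y - 1)]
  have hxs : |x| ≤ s := by
    rw [abs_le]; constructor <;> nlinarith [sq_nonneg (x - 1), sq_nonneg (x + 1), sq_nonneg y]
  have hx2 : x ^ 2 ≤ s := by nlinarith [sq_nonneg y]
  have hy2 : y ^ 2 ≤ s := by nlinarith [sq_nonneg x]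
  have hxy : |x * y| ≤ s := by
    rw [abs_le]; constructor <;> nlinarith [sq_nonneg (x - y), sq_nonneg (x + y)]
  have hm : (0 : ℝ) ≤ m := Nat.cast_nonneg m
  have t1 : lam ^ 2 * (s + 2 * (m + 1) * x ^ 2) ≤ lam ^ 2 * ((2 * m + 3) * s) :=
    mul_le_mul_of_nonneg_left (by nlinarith) (sq_nonneg _)
  have t2 : sig ^ 2 * (s + 2 * (m + 1) * y ^ 2) ≤ sig ^ 2 * ((2 * m + 3) * s) :=
    mul_le_mul_of_nonneg_left (by nlinarith) (sq_nonneg _)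
  have hρ1 : |ρ| ≤ 1 := abs_le.2 ⟨hρ.1.le, hρ.2.le⟩
  have t3 : 4 * (m + 1) * ρ * lam * sig * (x * y) ≤ 4 * (m + 1) * |lam * sig| * s := by
    have : ρ * (lam * sig) * (x * y) ≤ |lam * sig| * s :=
      calc ρ * (lam * sig) * (x * y) ≤ |ρ * (lam * sig) * (x * y)| := le_abs_self _
        _ = |ρ| * |lam * sig| * |x * y| := by rw [abs_mul, abs_mul]
        _ ≤ 1 * |lam * sig| * s := by gcongr
        _ = _ := by ring
    nlinarith
  have t4 : (c + d * y) * x + (a - b * y) * y ≤ (|a| + |b| + |c| + |d|) * s := by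
    have h1 : c * x ≤ |c| * s := (le_abs_self _).trans (by rw [abs_mul]; gcongr)
    have h2 : d * (x * y) ≤ |d| * s := (le_abs_self _).trans (by rw [abs_mul]; gcongr)
    have h3 : a * y ≤ |a| * s := (le_abs_self _).trans (by rw [abs_mul, abs_of_nonneg hy]; gcongr)
    have h4 : -b * y ^ 2 ≤ |b| * s :=
      (le_abs_self _).trans (by rw [abs_mul, abs_neg, abs_of_nonneg (sq_nonneg y)]; gcongr)
    linarith
  have hs0 : 0 < s := by linarith
  set Q := (2 * m + 3) * (lam ^ 2 + sig ^ 2) + 4 * (m + 1) * |lam * sig| with hQ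
  have hQ0 : 0 ≤ Q := by positivity
  have t5 : y * (lam ^ 2 * (s + 2 * (m + 1) * x ^ 2) + 4 * (m + 1) * ρ * lam * sig * (x * y)
      + sig ^ 2 * (s + 2 * (m + 1) * y ^ 2)) ≤ s * (Q * s) :=
    calc _ ≤ y * (Q * s) := mul_le_mul_of_nonneg_left (by rw [hQ]; linarith) hy
      _ ≤ s * (Q * s) := mul_le_mul_of_nonneg_right hys (by positivity)
  have t6 : 2 * s * ((c + d * y) * x + (a - b * y) * y)
      ≤ 2 * s * ((|a| + |b| + |c| + |d|) * s) := mul_le_mul_of_nonneg_left t4 (by linarith)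
  have hpos : 0 < K * s ^ m := by positivity
  calc _ ≤ K * s ^ m * (m + 2) * (s * (Q * s) + 2 * s * ((|a| + |b| + |c| + |d|) * s)) :=
        mul_le_mul_of_nonneg_left (add_le_add t5 t6) (by positivity)
    _ < K * s ^ m * (m + 2) * (s * (Q * s) + 2 * s * ((|a| + |b| + |c| + |d|) * s))
        + K * s ^ m * s ^ 2 := lt_add_of_pos_right _ (by positivity)
    _ = _ := by simp only [rate, barrier, ← hs, hQ]; ring

/-- The supersolution inequality on the line `y = 0`, where the `y`-derivative of the barrier
vanishes. At `y = 0` the operator reduces to `c ∂_x + a ∂_y`, so `Lop_barrier_lt` applies. -/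
lemma barrier_boundary_lt (a b c d lam sig : ℝ) (m : ℕ) {K x : ℝ} (hK : 0 < K) :
    c * (K * ((m + 2) * (1 + x ^ 2 + 0 ^ 2) ^ (m + 1) * (2 * x)))
      < K * (rate a b c d lam sig m * barrier m x 0) := by
  have h := Lop_barrier_lt a b c d lam sig 0 (by norm_num) m hK (x := x) le_rfl
  rw [Lop_barrier] at h
  refine lt_of_eq_of_lt ?_ h
  ring

/-! ### One-sided derivative tests -/

lemma deriv_nonneg_of_le_left {g : ℝ → ℝ} {g' t r : ℝ} (hg : HasDerivAt g g' t) (hr : r < t)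
    (h : ∀ s ∈ Icc r t, g s ≤ g t) : 0 ≤ g' := by
  have hs := (hasDerivWithinAt_iff_tendsto_slope' (s := Iio t) (by simp)).1 hg.hasDerivWithinAt
  refine ge_of_tendsto hs ?_
  filter_upwards [Ioo_mem_nhdsLT hr] with s hs
  rw [slope_def_field]
  exact div_nonneg_of_nonpos (by linarith [h s ⟨hs.1.le, hs.2.le⟩]) (by linarith [hs.2])

lemma deriv_nonpos_of_le_right {g : ℝ → ℝ} {g' t r : ℝ} (hg : HasDerivAt g g' t) (hr : t < r)
    (h : ∀ s ∈ Icc t r, g s ≤ g t) : g' ≤ 0 := by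
  have hs := (hasDerivWithinAt_iff_tendsto_slope' (s := Ioi t) (by simp)).1 hg.hasDerivWithinAt
  refine le_of_tendsto hs ?_
  filter_upwards [Ioo_mem_nhdsGT hr] with s hs
  rw [slope_def_field]
  exact div_nonpos_of_nonpos_of_nonneg (by linarith [h s ⟨hs.1.le, hs.2.le⟩]) (by linarith [hs.1])

/-! ### The comparison argument -/

/-- The growth bound confines the region where `w` exceeds the barrier to a bounded set. -/
lemma bounded_of_barrier_lt {C ε x y v : ℝ} {L : ℕ} (hε : 0 < ε) (hy : 0 ≤ y)
    (hv : |v| ≤ C * (1 + |x| ^ L + y ^ L)) (h : ε * barrier L x y < v) :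
    |x| < 3 * |C| / ε ∧ y < 3 * |C| / ε := by
  unfold barrier at h
  set s := 1 + x ^ 2 + y ^ 2 with hs
  have hs1 : 1 ≤ s := by nlinarith [sq_nonneg x, sq_nonneg y]
  have hys : y ≤ s := by nlinarith [sq_nonneg x, sq_nonneg (y - 1)]
  have hxs : |x| ≤ s := by
    rw [abs_le]; constructor <;> nlinarith [sq_nonneg (x - 1), sq_nonneg (x + 1), sq_nonneg y]
  have h1 : 1 + |x| ^ L + y ^ L ≤ 3 * s ^ L := by
    have := one_le_pow₀ hs1 (n := L)
    have := pow_le_pow_left₀ (abs_nonneg x) hxs L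
    have := pow_le_pow_left₀ hy hys L
    linarith
  have h2 : v ≤ |C| * (3 * s ^ L) :=
    calc v ≤ |v| := le_abs_self _
      _ ≤ C * (1 + |x| ^ L + y ^ L) := hv
      _ ≤ |C| * (1 + |x| ^ L + y ^ L) :=
        mul_le_mul_of_nonneg_right (le_abs_self C) (by positivity)
      _ ≤ _ := mul_le_mul_of_nonneg_left h1 (abs_nonneg _)
  have hsL : 0 < s ^ L := by positivity
  have h3 : ε * s ^ 2 < 3 * |C| := by
    have : s ^ L * (ε * s ^ 2) < s ^ L * (3 * |C|) := by
      rw [pow_add] at h; linarith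
    exact lt_of_mul_lt_mul_left this hsL.le
  have h4 : s < 3 * |C| / ε := by
    rw [lt_div_iff₀ hε]
    nlinarith [mul_nonneg hε.le (mul_nonneg (by linarith : (0 : ℝ) ≤ s) (sub_nonneg.2 hs1))]
  exact ⟨by linarith, by linarith⟩

/-- A solution stays below every positive multiple of `exp (M t) h`: a violation at a time `T' < T`
would give a positive maximum of the difference over a box in `[0, T']`, contradicting strictness. At
`y = 0` the two-sided `y`-derivative of `w` need not exist; it is nonpositive at the maximum if it does and
zero by convention otherwise, so the boundary equation serves equally in both cases. -/
lemma le_barrier (T a lam sig b c d ρ : ℝ) (ha : 0 < a) (hρ : -1 < ρ ∧ ρ < 1)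
    (w : ℝ → ℝ → ℝ → ℝ) (C : ℝ) (L : ℕ)
    (hcont : ContinuousOn (fun p : ℝ × ℝ × ℝ => w p.1 p.2.1 p.2.2)
      (Icc 0 T ×ˢ ((univ : Set ℝ) ×ˢ Ici 0)))
    (hC111 : ContDiffOn ℝ 1 (fun p : ℝ × ℝ × ℝ => w p.1 p.2.1 p.2.2)
      (Ico 0 T ×ˢ ((univ : Set ℝ) ×ˢ Ici 0)))
    (hC12 : ContDiffOn ℝ 2 (fun p : ℝ × ℝ × ℝ => w p.1 p.2.1 p.2.2)
      (Ico 0 T ×ˢ ((univ : Set ℝ) ×ˢ Ioi 0)))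
    (hgrowth : ∀ t ∈ Icc 0 T, ∀ x y : ℝ, 0 ≤ y → |w t x y| ≤ C * (1 + |x| ^ L + y ^ L))
    (hpde : ∀ t ∈ Ioc 0 T, ∀ x y : ℝ, 0 < y →
      deriv (fun s => w s x y) t - Lop a b c d lam sig ρ (fun x' y' => w t x' y') x y = 0)
    (hbd : ∀ t ∈ Ioc 0 T, ∀ x : ℝ,
      deriv (fun s => w s x 0) t - c * deriv (fun x' => w t x' 0) x
        - a * deriv (fun y' => w t x y') 0 = 0)
    (hinit : ∀ x y : ℝ, 0 ≤ y → w 0 x y = 0)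
    {T' : ℝ} (hT' : T' ∈ Ico 0 T) (x₀ y₀ : ℝ) (hy₀ : 0 ≤ y₀) {ε : ℝ} (hε : 0 < ε) :
    w T' x₀ y₀ ≤ ε * Real.exp (rate a b c d lam sig L * T') * barrier L x₀ y₀ := by
  by_contra! hviol
  set M := rate a b c d lam sig L with hM
  have hM0 : 0 ≤ M := by simp only [hM, rate]; positivity
  set R := 3 * |C| / ε + 1 with hR
  have hK : ∀ t, 0 ≤ t → ε ≤ ε * Real.exp (M * t) := fun t ht =>
    le_mul_of_one_le_right hε.le (Real.one_le_exp (by positivity))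
  have hloc : ∀ t ∈ Icc 0 T', ∀ x y, 0 ≤ y →
      ε * Real.exp (M * t) * barrier L x y < w t x y → |x| < R ∧ y < R := by
    intro t ht x y hy h
    have := bounded_of_barrier_lt hε hy (hgrowth t ⟨ht.1, ht.2.trans hT'.2.le⟩ x y hy)
      (lt_of_le_of_lt (mul_le_mul_of_nonneg_right (hK t ht.1) (barrier_pos L x y).le) h)
    exact ⟨by linarith [this.1], by linarith [this.2]⟩
  obtain ⟨hx₀R, hy₀R⟩ := hloc T' ⟨hT'.1, le_rfl⟩ x₀ y₀ hy₀ hviol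
  -- The maximum of the difference over a box containing the set of violations.
  have hcv : ContinuousOn (fun p : ℝ × ℝ × ℝ =>
      w p.1 p.2.1 p.2.2 - ε * Real.exp (M * p.1) * barrier L p.2.1 p.2.2)
      (Icc 0 T' ×ˢ (Icc (-R) R ×ˢ Icc 0 R)) := by
    refine (hcont.mono ?_).sub (Continuous.continuousOn ?_)
    · exact prod_mono (Icc_subset_Icc_right hT'.2.le) (prod_mono (subset_univ _) Icc_subset_Ici_self)
    · unfold barrier; fun_prop
  have hmem : (T', x₀, y₀) ∈ Icc 0 T' ×ˢ (Icc (-R) R ×ˢ Icc 0 R) :=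
    ⟨⟨hT'.1, le_rfl⟩, abs_le.1 hx₀R.le, hy₀, hy₀R.le⟩
  obtain ⟨⟨t, x, y⟩, ⟨ht, hx, hy⟩, hmax⟩ :=
    (isCompact_Icc.prod (isCompact_Icc.prod isCompact_Icc)).exists_isMaxOn ⟨_, hmem⟩ hcv
  simp only at ht hx hy
  have hmax' : ∀ t' ∈ Icc 0 T', ∀ x' ∈ Icc (-R) R, ∀ y' ∈ Icc 0 R,
      w t' x' y' - ε * Real.exp (M * t') * barrier L x' y'
        ≤ w t x y - ε * Real.exp (M * t) * barrier L x y :=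
    fun t' h1 x' h2 y' h3 => hmax (a := (t', x', y')) ⟨h1, h2, h3⟩
  have hpos : ε * Real.exp (M * t) * barrier L x y < w t x y := by
    have := hmax' T' ⟨hT'.1, le_rfl⟩ x₀ (abs_le.1 hx₀R.le) y₀ ⟨hy₀, hy₀R.le⟩
    linarith
  obtain ⟨hxR, hyR⟩ := hloc t ht x y hy.1 hpos
  rw [abs_lt] at hxR
  have ht0 : 0 < t := by
    rcases ht.1.eq_or_lt with h | h
    · subst h
      rw [hinit x y hy.1] at hpos
      have := mul_pos (mul_pos hε (Real.exp_pos (M * 0))) (barrier_pos L x y)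
      linarith
    · exact h
  have htT : t < T := ht.2.trans_lt hT'.2
  set K := ε * Real.exp (M * t) with hKdef
  have hK0 : 0 < K := by positivity
  -- The time derivative of `w` dominates that of the barrier at the maximum.
  have hdt : DifferentiableAt ℝ (fun s => w s x y) t := by
    have hd := (hC111.differentiableOn (by simp)) (t, x, y) ⟨⟨ht.1, htT⟩, mem_univ _, hy.1⟩
    have hl : DifferentiableWithinAt ℝ (fun s : ℝ => (s, x, y)) (Ico 0 T) t := by fun_prop
    have hs : MapsTo (fun s : ℝ => (s, x, y)) (Ico 0 T) (Ico 0 T ×ˢ (univ ×ˢ Ici 0)) :=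
      fun s hs => ⟨hs, mem_univ _, hy.1⟩
    exact (hd.comp t hl hs).differentiableAt (Ico_mem_nhds ht0 htT)
  have hφt : HasDerivAt (fun s => ε * Real.exp (M * s) * barrier L x y)
      (K * (M * barrier L x y)) t := by
    have h1 : HasDerivAt (fun s => Real.exp (M * s)) (Real.exp (M * t) * M) t := by
      simpa using ((hasDerivAt_id' t).const_mul M).exp
    refine ((h1.const_mul ε).mul_const (barrier L x y)).congr_deriv ?_
    rw [hKdef]; ring
  have hwt : K * (M * barrier L x y) ≤ deriv (fun s => w s x y) t := by
    have := deriv_nonneg_of_le_left (hdt.hasDerivAt.sub hφt) ht0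
      (fun s hs => hmax' s ⟨hs.1, hs.2.trans ht.2⟩ x hx y hy)
    linarith
  have htmem : t ∈ Ioc 0 T := ⟨ht0, htT.le⟩
  rcases hy.1.eq_or_lt with hy0 | hy0
  · subst hy0
    have hdx : DifferentiableAt ℝ (fun x' => w t x' 0) x := by
      have hd := (hC111.differentiableOn (by simp)) (t, x, 0) ⟨⟨ht.1, htT⟩, mem_univ _, hy.1⟩
      have hl : DifferentiableWithinAt ℝ (fun x' : ℝ => (t, x', (0 : ℝ))) univ x := by fun_prop
      have hs : MapsTo (fun x' : ℝ => (t, x', (0 : ℝ))) univ (Ico 0 T ×ˢ (univ ×ˢ Ici 0)) :=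
        fun s _ => ⟨⟨ht.1, htT⟩, mem_univ _, hy.1⟩
      exact (hd.comp x hl hs).differentiableAt Filter.univ_mem
    have hwx : deriv (fun x' => w t x' 0) x
        = K * ((L + 2) * (1 + x ^ 2 + 0 ^ 2) ^ (L + 1) * (2 * x)) := by
      have hm : IsLocalMax (fun x' => w t x' 0 - K * barrier L x' 0) x := by
        filter_upwards [Icc_mem_nhds hxR.1 hxR.2] with x' hx'
        exact hmax' t ht x' hx' 0 hy
      have := hm.hasDerivAt_eq_zero (hdx.hasDerivAt.sub (hasDerivAt_barrier_fst L K x 0))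
      linarith
    have hwy : deriv (fun y' => w t x y') 0 ≤ 0 := by
      by_cases hd : DifferentiableAt ℝ (fun y' => w t x y') 0
      · have := deriv_nonpos_of_le_right (hd.hasDerivAt.sub (hasDerivAt_barrier_snd L K x 0)) hyR
          (fun s hs => hmax' t ht x hx s hs)
        simpa using this
      · rw [deriv_zero_of_not_differentiableAt hd]
    have h1 := hbd t htmem x
    have h2 := barrier_boundary_lt a b c d lam sig L hK0 (x := x)
    rw [hwx] at h1
    have h3 := mul_nonpos_of_nonneg_of_nonpos ha.le hwy
    linarith
  · have hw2 : ContDiffAt ℝ 2 (fun p : ℝ × ℝ => w t p.1 p.2) (x, y) := by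
      have h1 : ContDiffAt ℝ 2 (fun p : ℝ × ℝ × ℝ => w p.1 p.2.1 p.2.2) (t, x, y) :=
        hC12.contDiffAt (prod_mem_nhds (Ico_mem_nhds ht0 htT)
          (prod_mem_nhds Filter.univ_mem (Ioi_mem_nhds hy0)))
      have h2 : ContDiffAt ℝ 2 (fun p : ℝ × ℝ => (t, p)) (x, y) := by fun_prop
      exact h1.comp (x, y) h2
    have hφ2 : ContDiffAt ℝ 2 (fun p : ℝ × ℝ => K * barrier L p.1 p.2) (x, y) :=
      (contDiff_barrier L K).contDiffAt
    have hm : IsLocalMax (fun p : ℝ × ℝ => w t p.1 p.2 - K * barrier L p.1 p.2) (x, y) := by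
      filter_upwards [prod_mem_nhds (Icc_mem_nhds hxR.1 hxR.2) (Icc_mem_nhds hy0 hyR)] with p hp
      exact hmax' t ht p.1 hp.1 p.2 hp.2
    have h1 := Lop_nonpos_of_isLocalMax a b c d lam sig ρ hρ hy.1 (hw2.sub hφ2) hm
    have h2 := Lop_sub a b c d lam sig ρ hw2 hφ2
    have h3 := Lop_barrier_lt a b c d lam sig ρ hρ L hK0 hy.1 (x := x)
    have h4 := hpde t htmem x y hy0
    linarith

/-- Letting the multiple of the barrier tend to zero. -/
lemma solution_nonpos (T a lam sig b c d ρ : ℝ) (ha : 0 < a) (hρ : -1 < ρ ∧ ρ < 1)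
    (w : ℝ → ℝ → ℝ → ℝ) (C : ℝ) (L : ℕ)
    (hcont : ContinuousOn (fun p : ℝ × ℝ × ℝ => w p.1 p.2.1 p.2.2)
      (Icc 0 T ×ˢ ((univ : Set ℝ) ×ˢ Ici 0)))
    (hC111 : ContDiffOn ℝ 1 (fun p : ℝ × ℝ × ℝ => w p.1 p.2.1 p.2.2)
      (Ico 0 T ×ˢ ((univ : Set ℝ) ×ˢ Ici 0)))
    (hC12 : ContDiffOn ℝ 2 (fun p : ℝ × ℝ × ℝ => w p.1 p.2.1 p.2.2)
      (Ico 0 T ×ˢ ((univ : Set ℝ) ×ˢ Ioi 0)))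
    (hgrowth : ∀ t ∈ Icc 0 T, ∀ x y : ℝ, 0 ≤ y → |w t x y| ≤ C * (1 + |x| ^ L + y ^ L))
    (hpde : ∀ t ∈ Ioc 0 T, ∀ x y : ℝ, 0 < y →
      deriv (fun s => w s x y) t - Lop a b c d lam sig ρ (fun x' y' => w t x' y') x y = 0)
    (hbd : ∀ t ∈ Ioc 0 T, ∀ x : ℝ,
      deriv (fun s => w s x 0) t - c * deriv (fun x' => w t x' 0) x
        - a * deriv (fun y' => w t x y') 0 = 0)
    (hinit : ∀ x y : ℝ, 0 ≤ y → w 0 x y = 0) :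
    ∀ t ∈ Ico 0 T, ∀ x y : ℝ, 0 ≤ y → w t x y ≤ 0 := by
  intro t ht x y hy
  have hB : 0 < Real.exp (rate a b c d lam sig L * t) * barrier L x y :=
    mul_pos (Real.exp_pos _) (barrier_pos L x y)
  by_contra! hpos
  have h := le_barrier T a lam sig b c d ρ ha hρ w C L hcont hC111 hC12 hgrowth hpde hbd hinit
    ht x y hy (ε := w t x y / (2 * (Real.exp (rate a b c d lam sig L * t) * barrier L x y)))
    (by positivity)
  rw [mul_assoc, div_mul_eq_mul_div, le_div_iff₀ (by positivity)] at h
  nlinarith [mul_pos hpos hB]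

/-- uniqueness for classical solutions of the degenerate log-Heston
PDE (forward time, zero discount): if `w` is continuous on `[0,T]×ℝ×[0,∞)`,
`C^{1,1,1}` on `[0,T)×ℝ×[0,∞)`, `C^{1,2}` on `[0,T)×ℝ×(0,∞)`, has polynomial
growth uniformly in `t`, solves `(∂_t − ℒ)w = 0` on `(0,T]×ℝ×(0,∞)`, the boundary
equation `∂_t w − c∂_x w − a∂_y w = 0` on `{y=0}`, and `w(0,·,·)=0`, then `w ≡ 0`. -/
theorem stmt1 (T a lam sig b c d ρ : ℝ) (hT : 0 < T) (ha : 0 < a) (hlam : 0 < lam)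
    (hsig : 0 < sig) (hρ : -1 < ρ ∧ ρ < 1)
    (w : ℝ → ℝ → ℝ → ℝ) (C : ℝ) (L : ℕ)
    (hcont : ContinuousOn (fun p : ℝ × ℝ × ℝ => w p.1 p.2.1 p.2.2)
      (Icc 0 T ×ˢ ((univ : Set ℝ) ×ˢ Ici 0)))
    (hC111 : ContDiffOn ℝ 1 (fun p : ℝ × ℝ × ℝ => w p.1 p.2.1 p.2.2)
      (Ico 0 T ×ˢ ((univ : Set ℝ) ×ˢ Ici 0)))
    (hC12 : ContDiffOn ℝ 2 (fun p : ℝ × ℝ × ℝ => w p.1 p.2.1 p.2.2)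
      (Ico 0 T ×ˢ ((univ : Set ℝ) ×ˢ Ioi 0)))
    (hgrowth : ∀ t ∈ Icc 0 T, ∀ x y : ℝ, 0 ≤ y → |w t x y| ≤ C * (1 + |x| ^ L + y ^ L))
    (hpde : ∀ t ∈ Ioc 0 T, ∀ x y : ℝ, 0 < y →
      deriv (fun s => w s x y) t - Lop a b c d lam sig ρ (fun x' y' => w t x' y') x y = 0)
    (hbd : ∀ t ∈ Ioc 0 T, ∀ x : ℝ,
      deriv (fun s => w s x 0) t - c * deriv (fun x' => w t x' 0) x
        - a * deriv (fun y' => w t x y') 0 = 0)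
    (hinit : ∀ x y : ℝ, 0 ≤ y → w 0 x y = 0) :
    ∀ t ∈ Icc 0 T, ∀ x y : ℝ, 0 ≤ y → w t x y = 0 := by

  have hzero : ∀ t ∈ Ico 0 T, ∀ x y : ℝ, 0 ≤ y → w t x y = 0 := by
    intro t ht x y hy
    refine le_antisymm (solution_nonpos T a lam sig b c d ρ ha hρ w C L hcont hC111 hC12
      hgrowth hpde hbd hinit t ht x y hy) ?_
    have h := solution_nonpos T a lam sig b c d ρ ha hρ (fun t x y => -w t x y) C L
      hcont.neg hC111.neg hC12.neg (by simpa using hgrowth)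
      (fun t ht x y hy => by
        have := hpde t ht x y hy
        rw [Lop_neg, deriv.fun_neg]
        linarith)
      (fun t ht x => by
        have := hbd t ht x
        simp only [deriv.fun_neg]
        linarith)
      (fun x y hy => by simpa using hinit x y hy) t ht x y hy
    simpa using h
  intro t ht x y hy
  rcases ht.2.lt_or_eq with h | rfl
  · exact hzero t ⟨ht.1, h⟩ x y hy
  -- The terminal time is reached by continuity.
  have hc : ContinuousOn (fun s => w s x y) (Icc 0 t) :=
    hcont.comp (f := fun s : ℝ => (s, x, y)) (by fun_prop) (fun s hs => ⟨hs, mem_univ _, hy⟩)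
  have hc' : Filter.Tendsto (fun s => w s x y) (𝓝[Ico 0 t] t) (𝓝 (w t x y)) :=
    (hc t ht).mono_left (nhdsWithin_mono t Ico_subset_Icc_self)
  have hne : (𝓝[Ico 0 t] t).NeBot := by
    rw [← mem_closure_iff_nhdsWithin_neBot, closure_Ico hT.ne]
    exact ht
  refine tendsto_nhds_unique hc' (tendsto_const_nhds.congr' ?_)
  filter_upwards [self_mem_nhdsWithin] with s hs
  exact (hzero s hs x y hy).symm
end

section
/- Let w be an upper semicontinuous viscosity subsolution and v a lower semicontinuous viscosity supersolution on [0,T] × ℝ × [0,∞) of the forward log-Heston equation ∂_t u + F(t,(x,y),u,Du,D²u) = 0 with F(s,(x,y),r,p,X) = −(y/2)(λ²X₁₁ + 2ρλσX₁₂ + σ²X₂₂) − μ_X(y)p₁ − μ_Y(y)p₂ − ϱr + h(T−s,x,y), with the same continuous initial data at t = 0, and suppose both w and v have polynomial growth in (x,y) uniformly in t. Then w ≤ v everywhere. -/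
/-!
The equation is linear: with `𝓗u = ∂ₜu - 𝓛u - ϱu`, where `𝓛` is the generator of the log-Heston
process, it reads `𝓗u + h(T - t, ·) = 0`. Hence no doubling of variables is needed: it suffices to
place an approximate classical solution between `w` and `v`. Write
`W(x, y) = 1 + x^{2m} + y^{2m}`, with `m` large compared with all growth exponents.

* For `K` large, `e^{Kt} W` satisfies `𝓗(e^{Kt} W) ≥ e^{Kt} W`, because `𝓛` does not raise the degree
  of polynomials (`exists_weight_supersolution`).
* If `U` is bounded and `C²` for `t > 0`, with `|𝓗U + h(T - t, ·)| ≤ εW` and `|U(0) - f| ≤ εW`, then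
  `w ≤ U + ε e^{Kt} W`, since a positive maximum of the difference would contradict the definition of
  a subsolution (`IsSub.le_smooth`); the weight gives compactness. As `-v` is a subsolution of the
  equation with source `-h`, also `v ≥ U - ε e^{Kt} W`. Thus `w - v ≤ 2ε e^{Kt} W`, and `ε → 0`.
* Such `U` exist because the model is affine. For a datum `e^{ipx - ny}`, `n ≥ 0`, the homogeneous
  equation is solved by `e^{A(t) + ipx + B(t)y}`, where `B` solves a Riccati equation. The substitution
  `B = N / D` linearizes it, and `|ρ| ≤ 1` makes the half plane `Re B ≤ 0` invariant, which excludes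
  blow-up and gives boundedness on `y ≥ 0` (`exists_affineExponent`, `exists_homogeneous`). A source
  `e^{κt} e^{ipx - ny}` with `κ > ϱ` is treated by the truncated resolvent
  `e^{κt} ∫₀^R e^{-κr} e^{A(r) + ipx + B(r)y} dr` (`exists_source`).
* Finite sums of these data are dense in the norm weighted by `W`: on a large box this is the theorem
  of Stone and Weierstrass in the variables `t`, `e^{ix/R}`, `e^{-y}` combined with a Tietze
  extension, and outside the box the weight dominates (`exists_mode_approx`).
-/

open Set Filter

noncomputable def pdT (φ : ℝ → ℝ → ℝ → ℝ) (t x y : ℝ) : ℝ := deriv (fun s => φ s x y) t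
noncomputable def pdX (φ : ℝ → ℝ → ℝ → ℝ) (t x y : ℝ) : ℝ := deriv (fun x' => φ t x' y) x
noncomputable def pdY (φ : ℝ → ℝ → ℝ → ℝ) (t x y : ℝ) : ℝ := deriv (fun y' => φ t x y') y
noncomputable def pdXX (φ : ℝ → ℝ → ℝ → ℝ) (t x y : ℝ) : ℝ :=
  deriv (fun x' => deriv (fun x'' => φ t x'' y) x') x
noncomputable def pdXY (φ : ℝ → ℝ → ℝ → ℝ) (t x y : ℝ) : ℝ :=
  deriv (fun x' => deriv (fun y' => φ t x' y') y) x
noncomputable def pdYY (φ : ℝ → ℝ → ℝ → ℝ) (t x y : ℝ) : ℝ :=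
  deriv (fun y' => deriv (fun y'' => φ t x y'') y') y

/-- The forward log-Heston Hamiltonian evaluated on scalar data:
`F(t,(x,y),r,(p₁,p₂),X) = −(y/2)(λ²X₁₁+2ρλσX₁₂+σ²X₂₂) − (c+dy)p₁ − (a−by)p₂ − ϱr + h(T−t,x,y)`. -/
noncomputable def logHestonF (T a lam sig b c d ρ ϱ : ℝ) (h : ℝ → ℝ → ℝ → ℝ)
    (t x y r p1 p2 X11 X12 X22 : ℝ) : ℝ :=
  -(y / 2) * (lam ^ 2 * X11 + 2 * ρ * lam * sig * X12 + sig ^ 2 * X22)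
    - (c + d * y) * p1 - (a - b * y) * p2 - ϱ * r + h (T - t) x y

open Topology MeasureTheory

/-! ### The generator and its linearity on twice differentiable functions -/

/-- The scalar coefficients of the log-Heston operator. -/
structure HestonCoeffs where
  a : ℝ
  lam : ℝ
  sig : ℝ
  b : ℝ
  c : ℝ
  d : ℝ
  ρ : ℝ
  ϱ : ℝ

/-- The linear parabolic operator `∂ₜφ - 𝓛φ - ϱφ`, i.e. `∂ₜφ + F(·, φ, Dφ, D²φ)` without the source
term `h`. -/
noncomputable def heatOp (P : HestonCoeffs) (φ : ℝ → ℝ → ℝ → ℝ) (t x y : ℝ) : ℝ :=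
  pdT φ t x y - (y / 2) * (P.lam ^ 2 * pdXX φ t x y + 2 * P.ρ * P.lam * P.sig * pdXY φ t x y
    + P.sig ^ 2 * pdYY φ t x y) - (P.c + P.d * y) * pdX φ t x y - (P.a - P.b * y) * pdY φ t x y
    - P.ϱ * φ t x y

/-- `φ`, seen as a function on `ℝ × ℝ × ℝ`, is of class `C²` near the point `(t, x, y)`. -/
def SmoothAt (φ : ℝ → ℝ → ℝ → ℝ) (t x y : ℝ) : Prop :=
  ContDiffAt ℝ 2 (fun q : ℝ × ℝ × ℝ => φ q.1 q.2.1 q.2.2) (t, x, y)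

theorem hasDerivAt_lineT (t x y : ℝ) :
    HasDerivAt (fun s : ℝ => ((s, x, y) : ℝ × ℝ × ℝ)) (1, 0, 0) t :=
  (hasDerivAt_id t).prodMk (hasDerivAt_const t (x, y))

theorem hasDerivAt_lineX (t x y : ℝ) :
    HasDerivAt (fun s : ℝ => ((t, s, y) : ℝ × ℝ × ℝ)) (0, 1, 0) x :=
  (hasDerivAt_const x t).prodMk ((hasDerivAt_id x).prodMk (hasDerivAt_const x y))

theorem hasDerivAt_lineY (t x y : ℝ) :
    HasDerivAt (fun s : ℝ => ((t, x, s) : ℝ × ℝ × ℝ)) (0, 0, 1) y :=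
  (hasDerivAt_const y t).prodMk ((hasDerivAt_const y x).prodMk (hasDerivAt_id y))

/-- The directional derivative of a function on `ℝ × ℝ × ℝ`. -/
noncomputable def dirD (e : ℝ × ℝ × ℝ) (Φ : ℝ × ℝ × ℝ → ℝ) (q : ℝ × ℝ × ℝ) : ℝ := fderiv ℝ Φ q e

theorem SmoothAt.eventually {φ : ℝ → ℝ → ℝ → ℝ} {t x y : ℝ} (h : SmoothAt φ t x y) :
    ∀ᶠ q : ℝ × ℝ × ℝ in 𝓝 (t, x, y), DifferentiableAt ℝ
      (fun q : ℝ × ℝ × ℝ => φ q.1 q.2.1 q.2.2) q := by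
  have := ContDiffAt.eventually h (by decide)
  filter_upwards [this] with q hq
  exact hq.differentiableAt (by norm_num)

theorem SmoothAt.dirD_differentiableAt {φ : ℝ → ℝ → ℝ → ℝ} {t x y : ℝ} (h : SmoothAt φ t x y)
    (e : ℝ × ℝ × ℝ) :
    DifferentiableAt ℝ (dirD e (fun q : ℝ × ℝ × ℝ => φ q.1 q.2.1 q.2.2)) (t, x, y) := by
  have h1 : ContDiffAt ℝ 1 (fderiv ℝ (fun q : ℝ × ℝ × ℝ => φ q.1 q.2.1 q.2.2)) (t, x, y) :=
    ContDiffAt.fderiv_right h (by norm_num)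
  exact (h1.differentiableAt (by norm_num)).clm_apply (differentiableAt_const e)

section
variable {φ ψ : ℝ → ℝ → ℝ → ℝ} {t x y : ℝ}

theorem pdT_eq_dirD (h : DifferentiableAt ℝ (fun q : ℝ × ℝ × ℝ => φ q.1 q.2.1 q.2.2) (t, x, y)) :
    pdT φ t x y = dirD (1, 0, 0) (fun q : ℝ × ℝ × ℝ => φ q.1 q.2.1 q.2.2) (t, x, y) := by
  have h1 := h.hasFDerivAt.comp_hasDerivAt t (hasDerivAt_lineT t x y)
  exact h1.deriv

theorem pdX_eq_dirD (h : DifferentiableAt ℝ (fun q : ℝ × ℝ × ℝ => φ q.1 q.2.1 q.2.2) (t, x, y)) :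
    pdX φ t x y = dirD (0, 1, 0) (fun q : ℝ × ℝ × ℝ => φ q.1 q.2.1 q.2.2) (t, x, y) := by
  have h1 := h.hasFDerivAt.comp_hasDerivAt x (hasDerivAt_lineX t x y)
  exact h1.deriv

theorem pdY_eq_dirD (h : DifferentiableAt ℝ (fun q : ℝ × ℝ × ℝ => φ q.1 q.2.1 q.2.2) (t, x, y)) :
    pdY φ t x y = dirD (0, 0, 1) (fun q : ℝ × ℝ × ℝ => φ q.1 q.2.1 q.2.2) (t, x, y) := by
  have h1 := h.hasFDerivAt.comp_hasDerivAt y (hasDerivAt_lineY t x y)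
  exact h1.deriv

theorem pdXX_eq_dirD (h : SmoothAt φ t x y) :
    pdXX φ t x y = dirD (0, 1, 0) (dirD (0, 1, 0)
      (fun q : ℝ × ℝ × ℝ => φ q.1 q.2.1 q.2.2)) (t, x, y) := by
  have h1 : (fun x' => deriv (fun x'' => φ t x'' y) x') =ᶠ[𝓝 x] fun x' =>
      dirD (0, 1, 0) (fun q : ℝ × ℝ × ℝ => φ q.1 q.2.1 q.2.2) (t, x', y) := by
    filter_upwards [(hasDerivAt_lineX t x y).continuousAt.eventually h.eventually] with s hs
    exact pdX_eq_dirD hs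
  rw [pdXX, h1.deriv_eq]
  exact ((h.dirD_differentiableAt _).hasFDerivAt.comp_hasDerivAt x (hasDerivAt_lineX t x y)).deriv

theorem pdXY_eq_dirD (h : SmoothAt φ t x y) :
    pdXY φ t x y = dirD (0, 1, 0) (dirD (0, 0, 1)
      (fun q : ℝ × ℝ × ℝ => φ q.1 q.2.1 q.2.2)) (t, x, y) := by
  have h1 : (fun x' => deriv (fun y' => φ t x' y') y) =ᶠ[𝓝 x] fun x' =>
      dirD (0, 0, 1) (fun q : ℝ × ℝ × ℝ => φ q.1 q.2.1 q.2.2) (t, x', y) := by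
    filter_upwards [(hasDerivAt_lineX t x y).continuousAt.eventually h.eventually] with s hs
    exact pdY_eq_dirD hs
  rw [pdXY, h1.deriv_eq]
  exact ((h.dirD_differentiableAt _).hasFDerivAt.comp_hasDerivAt x (hasDerivAt_lineX t x y)).deriv

theorem pdYY_eq_dirD (h : SmoothAt φ t x y) :
    pdYY φ t x y = dirD (0, 0, 1) (dirD (0, 0, 1)
      (fun q : ℝ × ℝ × ℝ => φ q.1 q.2.1 q.2.2)) (t, x, y) := by
  have h1 : (fun y' => deriv (fun y'' => φ t x y'') y') =ᶠ[𝓝 y] fun y' =>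
      dirD (0, 0, 1) (fun q : ℝ × ℝ × ℝ => φ q.1 q.2.1 q.2.2) (t, x, y') := by
    filter_upwards [(hasDerivAt_lineY t x y).continuousAt.eventually h.eventually] with s hs
    exact pdY_eq_dirD hs
  rw [pdYY, h1.deriv_eq]
  exact ((h.dirD_differentiableAt _).hasFDerivAt.comp_hasDerivAt y (hasDerivAt_lineY t x y)).deriv

/-- On `C²` functions `heatOp` is an expression in Fréchet derivatives. -/
theorem heatOp_eq_dirD (P : HestonCoeffs) (h : SmoothAt φ t x y) :
    heatOp P φ t x y =
      dirD (1, 0, 0) (fun q : ℝ × ℝ × ℝ => φ q.1 q.2.1 q.2.2) (t, x, y)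
      - (y / 2) * (P.lam ^ 2 * dirD (0, 1, 0) (dirD (0, 1, 0)
        (fun q : ℝ × ℝ × ℝ => φ q.1 q.2.1 q.2.2)) (t, x, y)
        + 2 * P.ρ * P.lam * P.sig * dirD (0, 1, 0) (dirD (0, 0, 1)
        (fun q : ℝ × ℝ × ℝ => φ q.1 q.2.1 q.2.2)) (t, x, y)
        + P.sig ^ 2 * dirD (0, 0, 1) (dirD (0, 0, 1)
        (fun q : ℝ × ℝ × ℝ => φ q.1 q.2.1 q.2.2)) (t, x, y))
      - (P.c + P.d * y) * dirD (0, 1, 0) (fun q : ℝ × ℝ × ℝ => φ q.1 q.2.1 q.2.2) (t, x, y)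
      - (P.a - P.b * y) * dirD (0, 0, 1) (fun q : ℝ × ℝ × ℝ => φ q.1 q.2.1 q.2.2) (t, x, y)
      - P.ϱ * φ t x y := by
  have h0 := h.eventually.self_of_nhds
  rw [heatOp, pdT_eq_dirD h0, pdX_eq_dirD h0, pdY_eq_dirD h0, pdXX_eq_dirD h, pdXY_eq_dirD h,
    pdYY_eq_dirD h]

theorem SmoothAt.add (h1 : SmoothAt φ t x y) (h2 : SmoothAt ψ t x y) :
    SmoothAt (fun t x y => φ t x y + ψ t x y) t x y := ContDiffAt.add h1 h2

theorem SmoothAt.const_mul (k : ℝ) (h1 : SmoothAt φ t x y) :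
    SmoothAt (fun t x y => k * φ t x y) t x y := contDiffAt_const.mul h1

theorem dirD_add (e : ℝ × ℝ × ℝ) {Φ Ψ : ℝ × ℝ × ℝ → ℝ} {q : ℝ × ℝ × ℝ}
    (h1 : DifferentiableAt ℝ Φ q) (h2 : DifferentiableAt ℝ Ψ q) :
    dirD e (fun q => Φ q + Ψ q) q = dirD e Φ q + dirD e Ψ q := by
  simp only [dirD]
  rw [show (fun q => Φ q + Ψ q) = Φ + Ψ from rfl, fderiv_add h1 h2]
  rfl

theorem dirD_const_mul (e : ℝ × ℝ × ℝ) (k : ℝ) {Φ : ℝ × ℝ × ℝ → ℝ} {q : ℝ × ℝ × ℝ}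
    (h1 : DifferentiableAt ℝ Φ q) :
    dirD e (fun q => k * Φ q) q = k * dirD e Φ q := by
  simp only [dirD]
  rw [fderiv_const_mul h1 k]
  rfl

theorem dirD_congr (e : ℝ × ℝ × ℝ) {Φ Ψ : ℝ × ℝ × ℝ → ℝ} {q : ℝ × ℝ × ℝ} (h : Φ =ᶠ[𝓝 q] Ψ) :
    dirD e Φ q = dirD e Ψ q := by
  simp only [dirD]
  rw [h.fderiv_eq]

theorem heatOp_add (P : HestonCoeffs) (h1 : SmoothAt φ t x y) (h2 : SmoothAt ψ t x y) :
    heatOp P (fun t x y => φ t x y + ψ t x y) t x y = heatOp P φ t x y + heatOp P ψ t x y := by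
  rw [heatOp_eq_dirD P h1, heatOp_eq_dirD P h2, heatOp_eq_dirD P (h1.add h2)]
  have e1 : ∀ e e' : ℝ × ℝ × ℝ, dirD e (dirD e'
      (fun q : ℝ × ℝ × ℝ => φ q.1 q.2.1 q.2.2 + ψ q.1 q.2.1 q.2.2)) (t, x, y)
      = dirD e (dirD e' (fun q : ℝ × ℝ × ℝ => φ q.1 q.2.1 q.2.2)) (t, x, y)
      + dirD e (dirD e' (fun q : ℝ × ℝ × ℝ => ψ q.1 q.2.1 q.2.2)) (t, x, y) := by
    intro e e'
    rw [← dirD_add e (h1.dirD_differentiableAt e') (h2.dirD_differentiableAt e')]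
    apply dirD_congr
    filter_upwards [h1.eventually, h2.eventually] with q hq1 hq2
    exact dirD_add e' hq1 hq2
  simp only [e1, dirD_add _ h1.eventually.self_of_nhds h2.eventually.self_of_nhds]
  ring

theorem heatOp_const_mul (P : HestonCoeffs) (k : ℝ) (h1 : SmoothAt φ t x y) :
    heatOp P (fun t x y => k * φ t x y) t x y = k * heatOp P φ t x y := by
  rw [heatOp_eq_dirD P h1, heatOp_eq_dirD P (h1.const_mul k)]
  have e1 : ∀ e e' : ℝ × ℝ × ℝ, dirD e (dirD e'
      (fun q : ℝ × ℝ × ℝ => k * φ q.1 q.2.1 q.2.2)) (t, x, y)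
      = k * dirD e (dirD e' (fun q : ℝ × ℝ × ℝ => φ q.1 q.2.1 q.2.2)) (t, x, y) := by
    intro e e'
    rw [← dirD_const_mul e k (h1.dirD_differentiableAt e')]
    apply dirD_congr
    filter_upwards [h1.eventually] with q hq1
    exact dirD_const_mul e' k hq1
  simp only [e1, dirD_const_mul _ k h1.eventually.self_of_nhds]
  ring

/-- The operator only depends on the germ of the function. -/
theorem heatOp_congr (P : HestonCoeffs) (h1 : SmoothAt φ t x y) (h2 : SmoothAt ψ t x y)
    (h : (fun q : ℝ × ℝ × ℝ => φ q.1 q.2.1 q.2.2) =ᶠ[𝓝 (t, x, y)]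
      fun q : ℝ × ℝ × ℝ => ψ q.1 q.2.1 q.2.2) :
    heatOp P φ t x y = heatOp P ψ t x y := by
  rw [heatOp_eq_dirD P h1, heatOp_eq_dirD P h2]
  have e1 : ∀ e e' : ℝ × ℝ × ℝ, dirD e (dirD e'
      (fun q : ℝ × ℝ × ℝ => φ q.1 q.2.1 q.2.2)) (t, x, y)
      = dirD e (dirD e' (fun q : ℝ × ℝ × ℝ => ψ q.1 q.2.1 q.2.2)) (t, x, y) := by
    intro e e'
    apply dirD_congr
    filter_upwards [h.eventuallyEq_nhds] with q hq
    exact dirD_congr e' hq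
  simp only [e1, dirD_congr _ h]
  rw [show φ t x y = ψ t x y from h.self_of_nhds]

/-- A function that is `C²` near a point agrees near that point with a globally `C²` function. -/
theorem SmoothAt.exists_global (h : SmoothAt φ t x y) :
    ∃ ψ : ℝ → ℝ → ℝ → ℝ, ContDiff ℝ 2 (fun q : ℝ × ℝ × ℝ => ψ q.1 q.2.1 q.2.2) ∧
      (fun q : ℝ × ℝ × ℝ => ψ q.1 q.2.1 q.2.2) =ᶠ[𝓝 (t, x, y)]
        fun q : ℝ × ℝ × ℝ => φ q.1 q.2.1 q.2.2 := by
  have h1 : {q | ContDiffAt ℝ 2 (fun q : ℝ × ℝ × ℝ => φ q.1 q.2.1 q.2.2) q} ∈ 𝓝 (t, x, y) :=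
    ContDiffAt.eventually h (by decide)
  obtain ⟨r, hr, hsub⟩ := Metric.nhds_basis_closedBall.mem_iff.1 h1
  let χ : ContDiffBump ((t, x, y) : ℝ × ℝ × ℝ) := ⟨r / 2, r, by positivity, by linarith⟩
  refine ⟨fun s x' y' => χ (s, x', y') * φ s x' y', ?_, ?_⟩
  · rw [contDiff_iff_contDiffAt]
    intro q
    by_cases hq : q ∈ Metric.closedBall ((t, x, y) : ℝ × ℝ × ℝ) r
    · have h2 : ContDiffAt ℝ 2 (fun q : ℝ × ℝ × ℝ => χ q) q :=
        (χ.contDiff (n := 2)).contDiffAt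
      exact h2.mul (hsub hq)
    · have : (fun q : ℝ × ℝ × ℝ => χ (q.1, q.2.1, q.2.2) * φ q.1 q.2.1 q.2.2) =ᶠ[𝓝 q]
          fun _ => 0 := by
        filter_upwards [Metric.isClosed_closedBall.isOpen_compl.mem_nhds hq] with z hz
        have : χ z = 0 := by
          rw [← Function.notMem_support, χ.support_eq]
          exact fun h => hz (Metric.ball_subset_closedBall h)
        simp [this]
      exact contDiffAt_const.congr_of_eventuallyEq this
  · filter_upwards [χ.eventuallyEq_one] with q hq
    have : χ (q.1, q.2.1, q.2.2) = 1 := hq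
    simp [this]

end

/-! ### Explicit values of the operator -/

/-- The real part of `e^{ipx} G(t, y)`: the shape of all solutions built below. -/
noncomputable def wave (p : ℝ) (G : ℝ → ℝ → ℂ) (t x y : ℝ) : ℝ :=
  (Complex.exp (Complex.I * p * x) * G t y).re

theorem HasDerivAt.complex_re {f : ℝ → ℂ} {f' : ℂ} {x : ℝ} (h : HasDerivAt f f' x) :
    HasDerivAt (fun s => (f s).re) f'.re x := by
  have h1 := Complex.reCLM.hasFDerivAt.comp_hasDerivAt x h
  exact h1

theorem hasDerivAt_expIpx (p x : ℝ) :
    HasDerivAt (fun s : ℝ => Complex.exp (Complex.I * p * s))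
      (Complex.exp (Complex.I * p * x) * (Complex.I * p)) x := by
  have h1 : HasDerivAt (fun s : ℝ => Complex.I * p * (s : ℂ)) (Complex.I * p * 1) x :=
    (Complex.ofRealCLM.hasDerivAt (x := x)).const_mul _
  simpa using h1.cexp

theorem heatOp_wave (P : HestonCoeffs) (p : ℝ) (G Gy : ℝ → ℝ → ℂ) (t x y : ℝ) (Gt Gyy : ℂ)
    (ht : HasDerivAt (fun s => G s y) Gt t) (hy : ∀ y', HasDerivAt (G t) (Gy t y') y')
    (hyy : HasDerivAt (Gy t) Gyy y) :
    heatOp P (wave p G) t x y = (Complex.exp (Complex.I * p * x) *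
      (Gt - (y / 2) * (P.lam ^ 2 * (-p ^ 2 * G t y)
        + 2 * P.ρ * P.lam * P.sig * (Complex.I * p * Gy t y)
        + P.sig ^ 2 * Gyy) - (P.c + P.d * y) * (Complex.I * p * G t y)
        - (P.a - P.b * y) * Gy t y - P.ϱ * G t y)).re := by
  have hT : pdT (wave p G) t x y = (Complex.exp (Complex.I * p * x) * Gt).re :=
    (ht.const_mul _).complex_re.deriv
  have hX : ∀ x', deriv (fun x'' => wave p G t x'' y) x'
      = (Complex.exp (Complex.I * p * x') * (Complex.I * p) * G t y).re := fun x' =>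
    ((hasDerivAt_expIpx p x').mul_const _).complex_re.deriv
  have hY : ∀ x' y', deriv (fun y'' => wave p G t x' y'') y'
      = (Complex.exp (Complex.I * p * x') * Gy t y').re := fun x' y' =>
    ((hy y').const_mul _).complex_re.deriv
  have hXX : pdXX (wave p G) t x y
      = (Complex.exp (Complex.I * p * x) * (Complex.I * p) * (Complex.I * p) * G t y).re := by
    simp only [pdXX, hX]
    exact ((((hasDerivAt_expIpx p x).mul_const _).mul_const _)).complex_re.deriv
  have hXY : pdXY (wave p G) t x y
      = (Complex.exp (Complex.I * p * x) * (Complex.I * p) * Gy t y).re := by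
    simp only [pdXY, hY]
    exact ((hasDerivAt_expIpx p x).mul_const _).complex_re.deriv
  have hYY : pdYY (wave p G) t x y = (Complex.exp (Complex.I * p * x) * Gyy).re := by
    simp only [pdYY, hY]
    exact (hyy.const_mul _).complex_re.deriv
  rw [heatOp, hT, hXX, hXY, hYY, pdX, hX, pdY, hY, wave]
  have hr : ∀ (r : ℝ) (z : ℂ), r * z.re = ((r : ℂ) * z).re := fun r z => by simp
  rw [hr, hr, hr, ← Complex.add_re, ← Complex.add_re, hr, hr, hr, hr, ← Complex.sub_re,
    ← Complex.sub_re, ← Complex.sub_re, ← Complex.sub_re]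
  congr 1
  push_cast
  have hI : Complex.exp (Complex.I * p * x) * (Complex.I * p) * (Complex.I * p) * G t y
      = Complex.exp (Complex.I * p * x) * (-p ^ 2 * G t y) := by
    linear_combination Complex.exp (Complex.I * p * x) * p ^ 2 * G t y * Complex.I_sq
  rw [hI]
  ring

theorem wave_smoothAt {p : ℝ} {G : ℝ → ℝ → ℂ} {t y : ℝ} (x : ℝ)
    (h : ContDiffAt ℝ 2 (fun q : ℝ × ℝ => G q.1 q.2) (t, y)) : SmoothAt (wave p G) t x y := by
  have h1 : ContDiffAt ℝ 2 (fun q : ℝ × ℝ × ℝ => G q.1 q.2.2) (t, x, y) :=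
    ContDiffAt.comp (g := fun q : ℝ × ℝ => G q.1 q.2)
      (f := fun q : ℝ × ℝ × ℝ => (q.1, q.2.2)) (t, x, y) h (by fun_prop)
  have h2 : ContDiffAt ℝ 2 (fun q : ℝ × ℝ × ℝ => Complex.exp (Complex.I * p * (q.2.1 : ℂ)))
      (t, x, y) := by
    have h3 : ContDiff ℝ 2 (fun s : ℝ => (s : ℂ)) := Complex.ofRealCLM.contDiff
    have h4 : ContDiff ℝ 2 (fun q : ℝ × ℝ × ℝ => ((q.2.1 : ℝ) : ℂ)) := h3.comp (by fun_prop)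
    exact ((contDiff_const.mul h4).cexp).contDiffAt
  exact (Complex.reCLM.contDiff.contDiffAt).comp (t, x, y) (h2.mul h1)

/-- The time-growing constant used to make a strict supersolution. -/
theorem heatOp_exp_const (P : HestonCoeffs) (μ κ t x y : ℝ) :
    heatOp P (fun t _ _ => μ * Real.exp (κ * t)) t x y = (κ - P.ϱ) * (μ * Real.exp (κ * t)) := by
  have hT : pdT (fun t _ _ => μ * Real.exp (κ * t)) t x y = μ * (Real.exp (κ * t) * (κ * 1)) :=
    ((((hasDerivAt_id t).const_mul κ).exp).const_mul μ).deriv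
  simp only [heatOp, hT, pdX, pdY, pdXX, pdXY, pdYY, deriv_const]
  ring

/-- The polynomial weight `1 + x^{2m} + y^{2m}`. -/
def weight (m : ℕ) (x y : ℝ) : ℝ := 1 + x ^ (2 * m) + y ^ (2 * m)

/-- `max 1 (max |x| y)`, the size that governs all growth conditions on `y ≥ 0`. -/
noncomputable def size (x y : ℝ) : ℝ := max 1 (max |x| y)

theorem one_le_size (x y : ℝ) : 1 ≤ size x y := le_max_left _ _
theorem abs_le_size (x y : ℝ) : |x| ≤ size x y := (le_max_left _ _).trans (le_max_right _ _)
theorem le_size (x y : ℝ) : y ≤ size x y := (le_max_right _ _).trans (le_max_right _ _)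

theorem weight_nonneg (m : ℕ) (x y : ℝ) : 0 ≤ weight m x y := by
  have h1 : 0 ≤ x ^ (2 * m) := (even_two_mul m).pow_nonneg x
  have h2 : 0 ≤ y ^ (2 * m) := (even_two_mul m).pow_nonneg y
  unfold weight; linarith

theorem size_pow_le_weight (m : ℕ) (x y : ℝ) : size x y ^ (2 * m) ≤ weight m x y := by
  have h1 : 0 ≤ x ^ (2 * m) := (even_two_mul m).pow_nonneg x
  have h2 : 0 ≤ y ^ (2 * m) := (even_two_mul m).pow_nonneg y
  have h3 : |x| ^ (2 * m) = x ^ (2 * m) := (even_two_mul m).pow_abs x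
  unfold weight size
  rcases max_choice (1 : ℝ) (max |x| y) with h | h <;> rw [h]
  · simp; linarith
  · rcases max_choice |x| y with h | h <;> rw [h] <;> linarith

theorem monomial_le_weight (m i j : ℕ) (hij : i + j ≤ 2 * m) (x y : ℝ) (hy : 0 ≤ y) :
    |x| ^ i * y ^ j ≤ weight m x y := by
  have h0 := one_le_size x y
  calc |x| ^ i * y ^ j ≤ size x y ^ i * size x y ^ j := by
        gcongr
        · exact abs_le_size x y
        · exact le_size x y
    _ = size x y ^ (i + j) := by rw [pow_add]
    _ ≤ size x y ^ (2 * m) := pow_le_pow_right₀ h0 hij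
    _ ≤ _ := size_pow_le_weight m x y

theorem smoothAt_expWeight (m : ℕ) (K t x y : ℝ) :
    SmoothAt (fun t x y => Real.exp (K * t) * weight m x y) t x y := by
  unfold SmoothAt weight
  apply ContDiff.contDiffAt
  fun_prop

/-- For large `K`, the function `e^{Kt}(1 + x^{2m} + y^{2m})` is a strict supersolution of the
homogeneous equation: the operator does not raise the degree of polynomials. -/
theorem exists_weight_supersolution (P : HestonCoeffs) (m : ℕ) (hm : 1 ≤ m) :
    ∃ K : ℝ, 0 ≤ K ∧ ∀ t x y : ℝ, 0 ≤ y →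
      Real.exp (K * t) * weight m x y ≤
        heatOp P (fun t x y => Real.exp (K * t) * weight m x y) t x y := by
  obtain ⟨l, rfl⟩ : ∃ l, m = l + 1 := ⟨m - 1, by omega⟩
  set M : ℝ := 2 * (l + 1) with hM
  have hM0 : 0 ≤ M := by positivity
  set K : ℝ := 1 + (P.lam ^ 2 * (M * (M - 1)) + P.sig ^ 2 * (M * (M - 1)))
    + M * (|P.c| + |P.d| + |P.a| + |P.b|) + |P.ϱ| with hK
  have hM1 : 0 ≤ M - 1 := by rw [hM]; linarith [(Nat.cast_nonneg l : (0:ℝ) ≤ l)]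
  refine ⟨K, by positivity, fun t x y hy => ?_⟩
  have e1 : ∀ z : ℝ, HasDerivAt (fun z : ℝ => z ^ (2 * (l + 1))) (M * z ^ (2 * l + 1)) z := by
    intro z
    refine (hasDerivAt_pow (2 * (l + 1)) z).congr_deriv ?_
    rw [hM, show 2 * (l + 1) - 1 = 2 * l + 1 by omega]
    push_cast; ring
  have e2 : ∀ z : ℝ, HasDerivAt (fun z : ℝ => M * z ^ (2 * l + 1))
      (M * ((M - 1) * z ^ (2 * l))) z := by
    intro z
    refine ((hasDerivAt_pow (2 * l + 1) z).const_mul M).congr_deriv ?_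
    rw [hM, show 2 * l + 1 - 1 = 2 * l by omega]
    push_cast; ring
  set E := Real.exp (K * t) with hE
  have hX : ∀ x', deriv (fun x'' => E * weight (l + 1) x'' y) x'
      = E * (M * x' ^ (2 * l + 1)) := fun x' =>
    ((((e1 x').const_add 1).add_const _).const_mul E).deriv
  have hY : ∀ x' y', deriv (fun y'' => E * weight (l + 1) x' y'') y'
      = E * (M * y' ^ (2 * l + 1)) := fun x' y' => (((e1 y').const_add _).const_mul E).deriv
  have hT : pdT (fun t x y => Real.exp (K * t) * weight (l + 1) x y) t x y
      = E * (K * 1) * weight (l + 1) x y :=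
    ((((hasDerivAt_id t).const_mul K).exp).mul_const _).deriv
  have hXX : pdXX (fun t x y => Real.exp (K * t) * weight (l + 1) x y) t x y
      = E * (M * ((M - 1) * x ^ (2 * l))) := by
    simp only [pdXX, ← hE, hX]
    exact ((e2 x).const_mul E).deriv
  have hYY : pdYY (fun t x y => Real.exp (K * t) * weight (l + 1) x y) t x y
      = E * (M * ((M - 1) * y ^ (2 * l))) := by
    simp only [pdYY, ← hE, hY]
    exact ((e2 y).const_mul E).deriv
  have hXY : pdXY (fun t x y => Real.exp (K * t) * weight (l + 1) x y) t x y = 0 := by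
    simp only [pdXY, ← hE, hY, deriv_const]
  rw [heatOp, hT, hXX, hXY, hYY, pdX, pdY, ← hE, hX, hY]
  set W := weight (l + 1) x y with hW
  have hW0 : 0 ≤ W := weight_nonneg _ _ _
  have mono := fun i j hij => monomial_le_weight (l + 1) i j hij x y hy
  have b1 : y * x ^ (2 * l) ≤ W := by
    have := mono (2 * l) 1 (by omega)
    rw [(even_two_mul l).pow_abs] at this
    linarith
  have b2 : y * y ^ (2 * l) ≤ W := by
    have := mono 0 (2 * l + 1) (by omega)
    rw [pow_succ] at this
    linarith
  have lin : ∀ k z : ℝ, |z| ≤ W → k * z ≤ |k| * W := by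
    intro k z hz
    calc k * z ≤ |k * z| := le_abs_self _
      _ = |k| * |z| := abs_mul _ _
      _ ≤ |k| * W := by gcongr
  have b3 : P.c * x ^ (2 * l + 1) ≤ |P.c| * W := lin _ _ (by
    have := mono (2 * l + 1) 0 (by omega)
    rw [abs_pow]; linarith)
  have b4 : P.d * (y * x ^ (2 * l + 1)) ≤ |P.d| * W := lin _ _ (by
    have := mono (2 * l + 1) 1 (by omega)
    rw [abs_mul, abs_pow, abs_of_nonneg hy]; linarith)
  have b5 : P.a * y ^ (2 * l + 1) ≤ |P.a| * W := lin _ _ (by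
    have := mono 0 (2 * l + 1) (by omega)
    rw [abs_of_nonneg (by positivity)]; linarith)
  have b6 : (-P.b) * (y * y ^ (2 * l + 1)) ≤ |P.b| * W := by
    rw [← abs_neg P.b]
    apply lin
    have := mono 0 (2 * l + 2) (by omega)
    rw [abs_of_nonneg (by positivity)]
    have h : y ^ (2 * l + 2) = y * y ^ (2 * l + 1) := by ring
    linarith
  have b7 : P.ϱ * W ≤ |P.ϱ| * W := by gcongr; exact le_abs_self _
  have c1 : P.lam ^ 2 * (M * (M - 1)) * (y * x ^ (2 * l)) ≤ P.lam ^ 2 * (M * (M - 1)) * W := by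
    gcongr
  have c2 : P.sig ^ 2 * (M * (M - 1)) * (y * y ^ (2 * l)) ≤ P.sig ^ 2 * (M * (M - 1)) * W := by
    gcongr
  have c3 : M * (P.c * x ^ (2 * l + 1) + P.d * (y * x ^ (2 * l + 1)) + P.a * y ^ (2 * l + 1)
      + (-P.b) * (y * y ^ (2 * l + 1))) ≤ M * (|P.c| * W + |P.d| * W + |P.a| * W + |P.b| * W) := by
    gcongr
  have d1 : 0 ≤ P.lam ^ 2 * (M * (M - 1)) * W := by positivity
  have d2 : 0 ≤ P.sig ^ 2 * (M * (M - 1)) * W := by positivity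
  have key : W ≤ K * W - (y / 2) * (P.lam ^ 2 * (M * ((M - 1) * x ^ (2 * l)))
      + P.sig ^ 2 * (M * ((M - 1) * y ^ (2 * l)))) - (P.c + P.d * y) * (M * x ^ (2 * l + 1))
      - (P.a - P.b * y) * (M * y ^ (2 * l + 1)) - P.ϱ * W := by
    rw [hK]
    linarith
  have hE0 : 0 ≤ E := (Real.exp_pos _).le
  have := mul_le_mul_of_nonneg_left key hE0
  linarith

/-! ### Comparison of a viscosity subsolution with a smooth strict supersolution -/

/-- The space-time domain `[0,T] × ℝ × [0,∞)`. -/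
def dom (T : ℝ) : Set (ℝ × ℝ × ℝ) := Icc 0 T ×ˢ ((univ : Set ℝ) ×ˢ Ici 0)

theorem mem_dom {T t x y : ℝ} : (t, x, y) ∈ dom T ↔ t ∈ Icc 0 T ∧ 0 ≤ y := by
  simp [dom]

/-- Viscosity subsolutions of `heatOp u + k = 0`, tested with functions that are `C²` only near the
contact point and that touch `u` there. -/
def IsSub (P : HestonCoeffs) (T : ℝ) (k u : ℝ → ℝ → ℝ → ℝ) : Prop :=
  ∀ φ : ℝ → ℝ → ℝ → ℝ, ∀ t ∈ Ioc 0 T, ∀ x y : ℝ, 0 ≤ y → SmoothAt φ t x y →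
    IsLocalMaxOn (fun p : ℝ × ℝ × ℝ => u p.1 p.2.1 p.2.2 - φ p.1 p.2.1 p.2.2)
      (Ioc 0 T ×ˢ ((univ : Set ℝ) ×ˢ Ici 0)) (t, x, y) →
    u t x y = φ t x y → heatOp P φ t x y + k t x y ≤ 0

theorem pdT_add_logHestonF (P : HestonCoeffs) (T : ℝ) (h φ : ℝ → ℝ → ℝ → ℝ) (t x y r : ℝ)
    (hr : r = φ t x y) :
    pdT φ t x y + logHestonF T P.a P.lam P.sig P.b P.c P.d P.ρ P.ϱ h t x y r
        (pdX φ t x y) (pdY φ t x y) (pdXX φ t x y) (pdXY φ t x y) (pdYY φ t x y)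
      = heatOp P φ t x y + h (T - t) x y := by
  rw [hr, heatOp, logHestonF]; ring

theorem isSub_of_sub (P : HestonCoeffs) (T : ℝ) (h w : ℝ → ℝ → ℝ → ℝ)
    (hsub : ∀ φ : ℝ → ℝ → ℝ → ℝ,
      ContDiff ℝ 2 (fun p : ℝ × ℝ × ℝ => φ p.1 p.2.1 p.2.2) →
      ∀ t ∈ Ioc 0 T, ∀ x y : ℝ, 0 ≤ y →
      IsLocalMaxOn (fun p : ℝ × ℝ × ℝ => w p.1 p.2.1 p.2.2 - φ p.1 p.2.1 p.2.2)
        (Ioc 0 T ×ˢ ((univ : Set ℝ) ×ˢ Ici 0)) (t, x, y) →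
      pdT φ t x y + logHestonF T P.a P.lam P.sig P.b P.c P.d P.ρ P.ϱ h t x y (w t x y)
        (pdX φ t x y) (pdY φ t x y) (pdXX φ t x y) (pdXY φ t x y) (pdYY φ t x y) ≤ 0) :
    IsSub P T (fun t x y => h (T - t) x y) w := by
  intro φ t ht x y hy hφ hmax heq
  obtain ⟨ψ, hψ, hψφ⟩ := hφ.exists_global
  have h0 : ψ t x y = φ t x y := hψφ.self_of_nhds
  rw [← heatOp_congr P hψ.contDiffAt hφ hψφ,
    ← pdT_add_logHestonF P T h ψ t x y (w t x y) (heq.trans h0.symm)]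
  refine hsub ψ hψ t ht x y hy ?_
  refine IsLocalMaxOn.congr hmax ?_ ?_
  · filter_upwards [hψφ.filter_mono nhdsWithin_le_nhds] with q hq
    simp only [hq]
  · exact ⟨ht, mem_univ _, hy⟩

theorem isSub_of_sup (P : HestonCoeffs) (T : ℝ) (h v : ℝ → ℝ → ℝ → ℝ)
    (hsup : ∀ φ : ℝ → ℝ → ℝ → ℝ,
      ContDiff ℝ 2 (fun p : ℝ × ℝ × ℝ => φ p.1 p.2.1 p.2.2) →
      ∀ t ∈ Ioc 0 T, ∀ x y : ℝ, 0 ≤ y →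
      IsLocalMinOn (fun p : ℝ × ℝ × ℝ => v p.1 p.2.1 p.2.2 - φ p.1 p.2.1 p.2.2)
        (Ioc 0 T ×ˢ ((univ : Set ℝ) ×ˢ Ici 0)) (t, x, y) →
      0 ≤ pdT φ t x y + logHestonF T P.a P.lam P.sig P.b P.c P.d P.ρ P.ϱ h t x y (v t x y)
        (pdX φ t x y) (pdY φ t x y) (pdXX φ t x y) (pdXY φ t x y) (pdYY φ t x y)) :
    IsSub P T (fun t x y => - h (T - t) x y) (fun t x y => - v t x y) := by
  intro φ t ht x y hy hφ hmax heq
  have hneg := hφ.const_mul (-1)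
  obtain ⟨ψ, hψ, hψφ⟩ := hneg.exists_global
  have h0 : ψ t x y = -1 * φ t x y := hψφ.self_of_nhds
  have h1 := hsup ψ hψ t ht x y hy (by
    refine IsLocalMinOn.congr hmax.neg ?_ ⟨ht, mem_univ _, hy⟩
    filter_upwards [hψφ.filter_mono nhdsWithin_le_nhds] with q hq
    simp only [hq]; ring)
  rw [pdT_add_logHestonF P T h ψ t x y (v t x y) (by rw [h0]; linarith),
    heatOp_congr P hψ.contDiffAt hneg hψφ, heatOp_const_mul P (-1) hφ] at h1
  linarith

theorem upperSemicontinuousOn_mul_of_pos {X : Type*} [TopologicalSpace X] {s : Set X}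
    {g u : X → ℝ} (hg : Continuous g) (hpos : ∀ z, 0 < g z) (hu : UpperSemicontinuousOn u s) :
    UpperSemicontinuousOn (fun z => g z * u z) s := by
  intro z hz c hc
  have h1 : Continuous (fun z => -(c / g z)) :=
    (continuous_const.div hg fun z => (hpos z).ne').neg
  have h2 := hu.add (h1.upperSemicontinuous.upperSemicontinuousOn s) z hz 0
  have h3 : u z + -(c / g z) < 0 := by
    have : u z < c / g z := by rw [lt_div_iff₀ (hpos z)]; linarith
    linarith
  filter_upwards [h2 h3] with z' hz'
  have : u z' < c / g z' := by linarith
  rw [lt_div_iff₀ (hpos z')] at this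
  linarith

/-- A subsolution lies below every smooth `U` that is a supersolution up to an error `ε·weight`,
up to the supersolution `ε e^{Kt}·weight` that absorbs the error. -/
theorem IsSub.le_smooth {P : HestonCoeffs} {T K : ℝ} {m : ℕ} {k u U : ℝ → ℝ → ℝ → ℝ}
    (hm : 1 ≤ m) (hK0 : 0 ≤ K)
    (hK : ∀ t x y : ℝ, 0 ≤ y → Real.exp (K * t) * weight m x y ≤
        heatOp P (fun t x y => Real.exp (K * t) * weight m x y) t x y)
    (hsub : IsSub P T k u)
    (husc : UpperSemicontinuousOn (fun p : ℝ × ℝ × ℝ => u p.1 p.2.1 p.2.2) (dom T))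
    (hUs : ∀ t ∈ Ioc 0 T, ∀ x y, 0 ≤ y → SmoothAt U t x y)
    (hUc : ContinuousOn (fun p : ℝ × ℝ × ℝ => U p.1 p.2.1 p.2.2) (dom T))
    {C : ℝ} (hC : ∀ t ∈ Icc 0 T, ∀ x y, 0 ≤ y → u t x y - U t x y ≤ C * size x y ^ (2 * m - 1))
    {ε : ℝ} (hε : 0 < ε)
    (hop : ∀ t ∈ Ioc 0 T, ∀ x y, 0 ≤ y → - (ε * weight m x y) ≤ heatOp P U t x y + k t x y)
    (h0 : ∀ x y, 0 ≤ y → u 0 x y ≤ U 0 x y + ε * weight m x y) :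
    ∀ t ∈ Icc 0 T, ∀ x y, 0 ≤ y → u t x y ≤ U t x y + ε * (Real.exp (K * t) * weight m x y) := by
  by_contra! hcon
  obtain ⟨t₀, ht₀, x₀, y₀, hy₀, hlt⟩ := hcon
  -- The rate `κ > ϱ` makes `μ e^{κt}` a strict supersolution whatever the sign of `ϱ`.
  set κ : ℝ := P.ϱ + 1 with hκ
  set Ψ : ℝ × ℝ × ℝ → ℝ := fun p => Real.exp (-(κ * p.1)) *
    (u p.1 p.2.1 p.2.2 + -(U p.1 p.2.1 p.2.2 + ε * (Real.exp (K * p.1) * weight m p.2.1 p.2.2)))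
    with hΨ
  have hΨusc : UpperSemicontinuousOn Ψ (dom T) := by
    apply upperSemicontinuousOn_mul_of_pos (by fun_prop) (fun _ => Real.exp_pos _)
    apply husc.add
    apply ContinuousOn.upperSemicontinuousOn
    apply ContinuousOn.neg
    apply hUc.add
    unfold weight
    fun_prop
  have hΨ0 : 0 < Ψ (t₀, x₀, y₀) := mul_pos (Real.exp_pos _) (by simp only; linarith)
  set R : ℝ := max (C / ε) (size x₀ y₀) with hR
  have hout : ∀ t ∈ Icc 0 T, ∀ x y, 0 ≤ y → C / ε ≤ size x y → Ψ (t, x, y) ≤ 0 := by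
    intro t ht x y hy hs
    apply mul_nonpos_of_nonneg_of_nonpos (Real.exp_pos _).le
    simp only
    have hs0 : 0 ≤ size x y := zero_le_one.trans (one_le_size x y)
    have h1 : C * size x y ^ (2 * m - 1) ≤ ε * weight m x y := by
      calc C * size x y ^ (2 * m - 1) ≤ (size x y * ε) * size x y ^ (2 * m - 1) := by
            gcongr
            rwa [← div_le_iff₀ hε]
        _ = ε * size x y ^ (2 * m) := by
            obtain ⟨l, rfl⟩ : ∃ l, m = l + 1 := ⟨m - 1, by omega⟩
            rw [show 2 * (l + 1) - 1 = 2 * l + 1 by omega]; ring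
        _ ≤ _ := by gcongr; exact size_pow_le_weight m x y
    have h2 : weight m x y ≤ Real.exp (K * t) * weight m x y :=
      le_mul_of_one_le_left (weight_nonneg _ _ _) (Real.one_le_exp (mul_nonneg hK0 ht.1))
    have h3 := mul_le_mul_of_nonneg_left h2 hε.le
    linarith [hC t ht x y hy]
  set Q : Set (ℝ × ℝ × ℝ) := Icc 0 T ×ˢ (Icc (-R) R ×ˢ Icc 0 R) with hQ
  have hQc : IsCompact Q := isCompact_Icc.prod (isCompact_Icc.prod isCompact_Icc)
  have hQD : Q ⊆ dom T := by
    rintro ⟨t, x, y⟩ ⟨ht, -, hy⟩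
    exact ⟨ht, mem_univ _, hy.1⟩
  have hmem : (t₀, x₀, y₀) ∈ Q := by
    have h1 : size x₀ y₀ ≤ R := le_max_right _ _
    exact ⟨ht₀, abs_le.1 ((abs_le_size _ _).trans h1), hy₀, (le_size _ _).trans h1⟩
  obtain ⟨⟨t₁, x₁, y₁⟩, hq, hmax⟩ :=
    UpperSemicontinuousOn.exists_isMaxOn ⟨_, hmem⟩ hQc (hΨusc.mono hQD)
  set μ := Ψ (t₁, x₁, y₁) with hμ
  have hμ0 : 0 < μ := hΨ0.trans_le (hmax hmem)
  have hall : ∀ p ∈ dom T, Ψ p ≤ μ := by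
    rintro ⟨t, x, y⟩ hp
    obtain ⟨ht, hy⟩ := mem_dom.1 hp
    by_cases hR' : size x y ≤ R
    · exact hmax ⟨ht, abs_le.1 ((abs_le_size _ _).trans hR'), hy, (le_size _ _).trans hR'⟩
    · exact (hout t ht x y hy ((le_max_left _ _).trans (not_le.1 hR').le)).trans hμ0.le
  obtain ⟨ht₁, hy₁⟩ := mem_dom.1 (hQD hq)
  have ht₁pos : 0 < t₁ := by
    rcases ht₁.1.eq_or_lt with h | h
    · exfalso
      rw [hμ, hΨ, ← h] at hμ0
      simp at hμ0
      linarith [h0 x₁ y₁ hy₁]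
    · exact h
  have ht₁' : t₁ ∈ Ioc 0 T := ⟨ht₁pos, ht₁.2⟩
  set ω : ℝ → ℝ → ℝ → ℝ := fun t x y => Real.exp (K * t) * weight m x y with hω
  set η : ℝ → ℝ → ℝ → ℝ := fun t _ _ => μ * Real.exp (κ * t) with hη
  set φ : ℝ → ℝ → ℝ → ℝ := fun t x y => (U t x y + ε * ω t x y) + η t x y with hφ
  have hΨφ : ∀ t x y, u t x y - φ t x y = Real.exp (κ * t) * (Ψ (t, x, y) - μ) := by
    intro t x y
    have : Real.exp (κ * t) * Real.exp (-(κ * t)) = 1 := by rw [← Real.exp_add]; simp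
    simp only [hΨ, hφ, hω, hη]
    linear_combination (-(u t x y + -(U t x y + ε * (Real.exp (K * t) * weight m x y)))) * this
  have htouch : u t₁ x₁ y₁ = φ t₁ x₁ y₁ := by
    have := hΨφ t₁ x₁ y₁
    rw [← hμ] at this
    linarith
  have hsU := hUs t₁ ht₁' x₁ y₁ hy₁
  have hsω : SmoothAt ω t₁ x₁ y₁ := smoothAt_expWeight m K t₁ x₁ y₁
  have hsη : SmoothAt η t₁ x₁ y₁ := by
    apply ContDiff.contDiffAt
    simp only [hη]
    fun_prop
  have hloc : IsLocalMaxOn (fun p : ℝ × ℝ × ℝ => u p.1 p.2.1 p.2.2 - φ p.1 p.2.1 p.2.2)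
      (Ioc 0 T ×ˢ ((univ : Set ℝ) ×ˢ Ici 0)) (t₁, x₁, y₁) := by
    apply IsMaxOn.localize
    rintro ⟨t, x, y⟩ ⟨ht, -, hy⟩
    change u t x y - φ t x y ≤ u t₁ x₁ y₁ - φ t₁ x₁ y₁
    rw [htouch, sub_self, hΨφ]
    apply mul_nonpos_of_nonneg_of_nonpos (Real.exp_pos _).le
    linarith [hall (t, x, y) (mem_dom.2 ⟨⟨ht.1.le, ht.2⟩, hy⟩)]
  have hfin := hsub φ t₁ ht₁' x₁ y₁ hy₁ ((hsU.add (hsω.const_mul ε)).add hsη) hloc htouch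
  rw [hφ, heatOp_add P (hsU.add (hsω.const_mul ε)) hsη, heatOp_add P hsU (hsω.const_mul ε),
    heatOp_const_mul P ε hsω, hη, heatOp_exp_const] at hfin
  have e1 := hop t₁ ht₁' x₁ y₁ hy₁
  have e2 : weight m x₁ y₁ ≤ heatOp P ω t₁ x₁ y₁ :=
    le_trans (le_mul_of_one_le_left (weight_nonneg _ _ _)
      (Real.one_le_exp (mul_nonneg hK0 ht₁.1))) (hK t₁ x₁ y₁ hy₁)
  have e3 := mul_le_mul_of_nonneg_left e2 hε.le
  have e4 : 0 < (κ - P.ϱ) * (μ * Real.exp (κ * t₁)) := by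
    rw [hκ]; have := Real.exp_pos (κ * t₁); simp only [add_sub_cancel_left, one_mul]; positivity
  linarith

/-! ### The Riccati system of the affine transform -/

theorem exists_linear_ode (α β γ n₀ : ℂ) :
    ∃ N D : ℝ → ℂ, N 0 = n₀ ∧ D 0 = 1 ∧ (∀ t, HasDerivAt N (β * N t + γ * D t) t) ∧
      (∀ t, HasDerivAt D (-α * N t) t) := by
  let M : (ℂ × ℂ) →L[ℝ] (ℂ × ℂ) :=
    (β • ContinuousLinearMap.fst ℝ ℂ ℂ + γ • ContinuousLinearMap.snd ℝ ℂ ℂ).prod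
      ((-α) • ContinuousLinearMap.fst ℝ ℂ ℂ)
  let Y : ℝ → ℂ × ℂ := fun t => NormedSpace.exp (t • M) (n₀, 1)
  have hY : ∀ t, HasDerivAt Y (M (Y t)) t := by
    intro t
    have h1 := (hasDerivAt_exp_smul_const' M t).clm_apply (hasDerivAt_const t ((n₀, 1) : ℂ × ℂ))
    simpa using h1
  have hY0 : Y 0 = (n₀, 1) := by
    have h0 : (0 : ℝ) • M = 0 := by
      ext z <;> simp
    show NormedSpace.exp ((0 : ℝ) • M) (n₀, 1) = _
    rw [h0, NormedSpace.exp_zero]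
    rfl
  refine ⟨fun t => (Y t).1, fun t => (Y t).2, by simp [hY0], by simp [hY0], ?_, ?_⟩
  · intro t
    have h1 : HasDerivAt (fun t => (Y t).1) _ t :=
      (ContinuousLinearMap.fst ℝ ℂ ℂ).hasFDerivAt.comp_hasDerivAt t (hY t)
    exact h1.congr_deriv (by simp [M])
  · intro t
    have h1 : HasDerivAt (fun t => (Y t).2) _ t :=
      (ContinuousLinearMap.snd ℝ ℂ ℂ).hasFDerivAt.comp_hasDerivAt t (hY t)
    exact h1.congr_deriv (by simp [M])

theorem linear_ode_contDiff {α β γ : ℂ} {N D : ℝ → ℂ}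
    (hN : ∀ t, HasDerivAt N (β * N t + γ * D t) t) (hD : ∀ t, HasDerivAt D (-α * N t) t) :
    ContDiff ℝ 2 N ∧ ContDiff ℝ 2 D := by
  have h : ∀ k : ℕ, ContDiff ℝ k N ∧ ContDiff ℝ k D := by
    intro k
    induction k with
    | zero =>
      have h1 : Continuous N := continuous_iff_continuousAt.2 fun t => (hN t).continuousAt
      have h2 : Continuous D := continuous_iff_continuousAt.2 fun t => (hD t).continuousAt
      exact ⟨by simpa using h1, by simpa using h2⟩
    | succ k ih =>
      have e1 : deriv N = fun t => β * N t + γ * D t := funext fun t => (hN t).deriv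
      have e2 : deriv D = fun t => -α * N t := funext fun t => (hD t).deriv
      push_cast
      rw [contDiff_succ_iff_deriv, contDiff_succ_iff_deriv, e1, e2]
      exact ⟨⟨fun t => (hN t).differentiableAt, fun h => absurd h (by simp),
        (contDiff_const.mul ih.1).add (contDiff_const.mul ih.2)⟩,
        fun t => (hD t).differentiableAt, fun h => absurd h (by simp), contDiff_const.mul ih.1⟩
  exact_mod_cast h 2

theorem HasDerivAt.complex_conj {f : ℝ → ℂ} {f' : ℂ} {x : ℝ} (h : HasDerivAt f f' x) :
    HasDerivAt (fun s => starRingEnd ℂ (f s)) (starRingEnd ℂ f') x := by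
  have h1 := Complex.conjCLE.toContinuousLinearMap.hasFDerivAt.comp_hasDerivAt x h
  exact h1

/-- The quadratic form of the diffusion matrix, `|ρ| ≤ 1`, keeps `Re (N conj D)` nonpositive. -/
theorem riccati_quadratic (lam sig ρ p : ℝ) (hρ : -1 < ρ ∧ ρ < 1) (N D : ℂ) :
    -(lam ^ 2 * p ^ 2 / 2) * Complex.normSq D - sig ^ 2 / 2 * Complex.normSq N
      - ρ * lam * sig * p * (N * starRingEnd ℂ D).im ≤ 0 := by
  have h1 : ((N * starRingEnd ℂ D).im) ^ 2 ≤ Complex.normSq N * Complex.normSq D := by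
    have : Complex.normSq (N * starRingEnd ℂ D) = Complex.normSq N * Complex.normSq D := by
      rw [Complex.normSq_mul, Complex.normSq_conj]
    rw [← this, Complex.normSq_apply]
    nlinarith [sq_nonneg (N * starRingEnd ℂ D).re]
  set s := (N * starRingEnd ℂ D).im
  have hn : 0 ≤ Complex.normSq N := Complex.normSq_nonneg N
  have hd : 0 ≤ Complex.normSq D := Complex.normSq_nonneg D
  set u := Complex.normSq N
  set w := Complex.normSq D
  have h2 : |s| ≤ √u * √w := by
    rw [← Real.sqrt_mul hn]; exact Real.abs_le_sqrt h1
  have h3 : |ρ| ≤ 1 := abs_le.2 ⟨hρ.1.le, hρ.2.le⟩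
  have h4 : -(ρ * lam * sig * p * s) ≤ |lam * p| * |sig| * (√u * √w) := by
    calc -(ρ * lam * sig * p * s) ≤ |ρ * lam * sig * p * s| := neg_le_abs _
      _ = |ρ| * (|lam * p| * |sig| * |s|) := by simp only [abs_mul]; ring
      _ ≤ 1 * (|lam * p| * |sig| * (√u * √w)) := by gcongr
      _ = _ := one_mul _
  have h5 : u = √u ^ 2 := (Real.sq_sqrt hn).symm
  have h6 : w = √w ^ 2 := (Real.sq_sqrt hd).symm
  have h7 : |lam * p| ^ 2 = lam ^ 2 * p ^ 2 := by rw [sq_abs]; ring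
  have h8 : |sig| ^ 2 = sig ^ 2 := sq_abs _
  have h9 := sq_nonneg (|lam * p| * √w - |sig| * √u)
  have h10 : (|lam * p| * √w - |sig| * √u) ^ 2
      = lam ^ 2 * p ^ 2 * w + sig ^ 2 * u - 2 * (|lam * p| * |sig| * (√u * √w)) := by
    rw [h5, h6, ← h7, ← h8, Real.sqrt_sq (Real.sqrt_nonneg _), Real.sqrt_sq (Real.sqrt_nonneg _)]
    ring
  linarith

/-- Linearizing `B' = (σ²/2) B² + (iρλσp - b) B + (idp - λ²p²/2)`, `B(0) = -n`, by `B = N / D`: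
the half plane `Re B ≤ 0` is invariant, so `|D|` is nondecreasing and `B` does not blow up. -/
theorem linear_ode_bounds (P : HestonCoeffs) (hρ : -1 < P.ρ ∧ P.ρ < 1) (p : ℝ) {n : ℝ}
    (hn : 0 ≤ n) {N D : ℝ → ℂ} (hN0 : N 0 = ((-n : ℝ) : ℂ)) (hD0 : D 0 = 1)
    (hN : ∀ t, HasDerivAt N ((Complex.I * P.ρ * P.lam * P.sig * p - P.b) * N t
      + (Complex.I * P.d * p - P.lam ^ 2 * p ^ 2 / 2) * D t) t)
    (hD : ∀ t, HasDerivAt D (-(P.sig ^ 2 / 2 : ℂ) * N t) t) :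
    ∀ t, 0 ≤ t → (N t * starRingEnd ℂ (D t)).re ≤ 0 ∧ D t ≠ 0 := by
  obtain ⟨s, hs⟩ : ∃ s : ℝ, s = P.sig ^ 2 / 2 := ⟨_, rfl⟩
  obtain ⟨l, hl⟩ : ∃ l : ℝ, l = P.lam ^ 2 * p ^ 2 / 2 := ⟨_, rfl⟩
  replace hD : ∀ t, HasDerivAt D (-(s : ℂ) * N t) t := by
    simpa only [hs, Complex.ofReal_div, Complex.ofReal_pow, Complex.ofReal_ofNat] using hD
  replace hN : ∀ t, HasDerivAt N ((Complex.I * P.ρ * P.lam * P.sig * p - P.b) * N t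
      + (Complex.I * P.d * p - (l : ℂ)) * D t) t := by
    simpa only [hl, Complex.ofReal_div, Complex.ofReal_pow, Complex.ofReal_ofNat,
      Complex.ofReal_mul] using hN
  have hz : ∀ t, HasDerivAt (fun t => Real.exp (P.b * t) * (N t * starRingEnd ℂ (D t)).re)
      (Real.exp (P.b * t) * (-(P.lam ^ 2 * p ^ 2 / 2) * Complex.normSq (D t)
        - P.sig ^ 2 / 2 * Complex.normSq (N t)
        - P.ρ * P.lam * P.sig * p * (N t * starRingEnd ℂ (D t)).im)) t := by
    intro t
    have h1 := ((hN t).mul (hD t).complex_conj).complex_re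
    have h2 := (((hasDerivAt_id t).const_mul P.b).exp).mul h1
    refine h2.congr_deriv ?_
    rw [← hs, ← hl]
    simp [Complex.normSq_apply, Complex.mul_re, Complex.mul_im]
    ring
  have hanti : ∀ t, 0 ≤ t → (N t * starRingEnd ℂ (D t)).re ≤ 0 := by
    intro t ht
    have h1 : Antitone (fun t => Real.exp (P.b * t) * (N t * starRingEnd ℂ (D t)).re) := by
      apply antitone_of_deriv_nonpos fun t => (hz t).differentiableAt
      intro t
      rw [(hz t).deriv]
      exact mul_nonpos_of_nonneg_of_nonpos (Real.exp_pos _).le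
        (riccati_quadratic P.lam P.sig P.ρ p hρ (N t) (D t))
    have h2 := h1 ht
    simp only [hN0, hD0] at h2
    simp at h2
    by_contra! h3
    have h4 : 0 < Real.exp (P.b * t) * (N t * starRingEnd ℂ (D t)).re :=
      mul_pos (Real.exp_pos _) h3
    simp at h4
    linarith
  refine fun t ht => ⟨hanti t ht, ?_⟩
  have hq : ∀ t, HasDerivAt (fun t => (D t * starRingEnd ℂ (D t)).re)
      (-(P.sig ^ 2 * (N t * starRingEnd ℂ (D t)).re)) t := by
    intro t
    refine ((hD t).mul (hD t).complex_conj).complex_re.congr_deriv ?_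
    rw [show P.sig ^ 2 = 2 * s by rw [hs]; ring]
    simp [Complex.mul_re, Complex.mul_im]
    ring
  have h1 : MonotoneOn (fun t => (D t * starRingEnd ℂ (D t)).re) (Ici 0) := by
    apply monotoneOn_of_deriv_nonneg (convex_Ici 0)
    · exact fun t _ => (hq t).continuousAt.continuousWithinAt
    · exact fun t _ => (hq t).differentiableAt.differentiableWithinAt
    · intro t ht
      rw [interior_Ici] at ht
      rw [(hq t).deriv]
      have := mul_nonpos_of_nonneg_of_nonpos (sq_nonneg P.sig) (hanti t (mem_Ioi.1 ht).le)
      linarith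
  have h2 := h1 (mem_Ici.2 le_rfl) (mem_Ici.2 ht) ht
  simp only [hD0] at h2
  intro h3
  rw [h3] at h2
  simp at h2
  linarith

/-- The exponents of the affine transform `e^{A(t) + ipx + B(t)y}` with initial value
`e^{ipx - ny}`, extended to `t < 0` by continuous functions without meaning there. The bounds on
the real parts make the transform bounded on `y ≥ 0`; the one on `A` uses `a ≥ 0`. -/
structure IsAffineExponent (P : HestonCoeffs) (p n : ℝ) (A B : ℝ → ℂ) : Prop where
  contA : Continuous A
  contB : Continuous B
  A_zero : A 0 = 0
  B_zero : B 0 = ((-n : ℝ) : ℂ)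
  re_B : ∀ t, (B t).re ≤ 0
  re_A : ∀ t, 0 ≤ t → (A t).re ≤ P.ϱ * t
  smoothA : ∀ t, 0 < t → ContDiffAt ℝ 2 A t
  smoothB : ∀ t, 0 < t → ContDiffAt ℝ 2 B t
  derivA : ∀ t, 0 < t → HasDerivAt A (P.a * B t + Complex.I * P.c * p + P.ϱ) t
  derivB : ∀ t, 0 < t → HasDerivAt B (P.sig ^ 2 / 2 * B t ^ 2
    + (Complex.I * P.ρ * P.lam * P.sig * p - P.b) * B t
    + (Complex.I * P.d * p - P.lam ^ 2 * p ^ 2 / 2)) t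

theorem exists_affineExponent (P : HestonCoeffs) (ha : 0 ≤ P.a) (hρ : -1 < P.ρ ∧ P.ρ < 1)
    (p : ℝ) {n : ℝ} (hn : 0 ≤ n) : ∃ A B : ℝ → ℂ, IsAffineExponent P p n A B := by
  obtain ⟨N, D, hN0, hD0, hN, hD⟩ := exists_linear_ode (P.sig ^ 2 / 2 : ℂ)
    (Complex.I * P.ρ * P.lam * P.sig * p - P.b) (Complex.I * P.d * p - P.lam ^ 2 * p ^ 2 / 2)
    ((-n : ℝ) : ℂ)
  have hb := linear_ode_bounds P hρ p hn hN0 hD0 hN hD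
  obtain ⟨hNs, hDs⟩ := linear_ode_contDiff hN hD
  set B : ℝ → ℂ := fun t => N (max t 0) / D (max t 0) with hB
  have hmax : Continuous fun t : ℝ => max t 0 := by fun_prop
  have hBc : Continuous B := (hNs.continuous.comp hmax).div (hDs.continuous.comp hmax)
    fun t => (hb _ (le_max_right t 0)).2
  have hBev : ∀ t, 0 < t → B =ᶠ[𝓝 t] fun t => N t / D t := by
    intro t ht
    filter_upwards [lt_mem_nhds ht] with s hs
    simp only [hB, max_eq_left hs.le]
  have hBs : ∀ t, 0 < t → ContDiffAt ℝ 2 B t := fun t ht =>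
    (hNs.contDiffAt.mul (hDs.contDiffAt.inv (hb t ht.le).2)).congr_of_eventuallyEq
      (by simpa only [div_eq_mul_inv, Pi.inv_apply] using hBev t ht)
  have hBre : ∀ t, (B t).re ≤ 0 := by
    intro t
    have h1 := (hb _ (le_max_right t 0)).1
    simp only [hB, div_eq_mul_inv, Complex.inv_def, ← mul_assoc]
    rw [Complex.re_mul_ofReal]
    exact mul_nonpos_of_nonpos_of_nonneg h1 (inv_nonneg.2 (Complex.normSq_nonneg _))
  set A : ℝ → ℂ := fun t => ∫ s in (0:ℝ)..t, (P.a * B s + Complex.I * P.c * p + P.ϱ) with hA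
  have hint : Continuous fun s => (P.a * B s + Complex.I * P.c * p + P.ϱ) := by fun_prop
  have hAd : ∀ t, HasDerivAt A (P.a * B t + Complex.I * P.c * p + P.ϱ) t := fun t =>
    intervalIntegral.integral_hasDerivAt_right (hint.intervalIntegrable _ _)
      (hint.stronglyMeasurableAtFilter _ _) hint.continuousAt
  refine ⟨A, B, ?_, hBc, by simp [hA], ?_, hBre, ?_, ?_, hBs, fun t _ => hAd t, ?_⟩
  · exact continuous_iff_continuousAt.2 fun t => (hAd t).continuousAt
  · simp [hB, hN0, hD0]
  · intro t ht
    have h1 : Antitone fun t => (A t).re - P.ϱ * t := by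
      have hd : ∀ t, HasDerivAt (fun t => (A t).re - P.ϱ * t) (P.a * (B t).re) t := by
        intro t
        refine ((hAd t).complex_re.sub ((hasDerivAt_id t).const_mul P.ϱ)).congr_deriv ?_
        simp
      apply antitone_of_deriv_nonpos fun t => (hd t).differentiableAt
      intro t
      rw [(hd t).deriv]
      exact mul_nonpos_of_nonneg_of_nonpos ha (hBre t)
    have h2 := h1 ht
    simp [hA] at h2
    simpa [hA] using h2
  · intro t ht
    have h1 : ContDiffOn ℝ (1 + 1) A (Ioi 0) := by
      rw [contDiffOn_succ_iff_deriv_of_isOpen isOpen_Ioi]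
      refine ⟨fun t _ => (hAd t).differentiableAt.differentiableWithinAt,
        fun h => absurd h (by simp), ?_⟩
      rw [show deriv A = fun t => P.a * B t + Complex.I * P.c * p + P.ϱ from
        funext fun t => (hAd t).deriv]
      intro t ht
      exact (((contDiffAt_const.mul ((hBs t ht).of_le (by norm_num))).add
        contDiffAt_const).add contDiffAt_const).contDiffWithinAt
    exact (h1.contDiffAt (Ioi_mem_nhds ht)).of_le (by norm_num)
  · intro t ht
    have hD' := (hb t ht.le).2
    have h1 := ((hN t).div (hD t) hD').congr_of_eventuallyEq (hBev t ht)
    refine h1.congr_deriv ?_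
    rw [(hBev t ht).self_of_nhds]
    field_simp
    ring

/-! ### Exact and approximate classical solutions -/

/-- Bounded functions, continuous on `[0,T] × ℝ × [0,∞)` and of class `C²` near each of its points
with `t > 0`. -/
structure Regular (T : ℝ) (U : ℝ → ℝ → ℝ → ℝ) : Prop where
  smooth : ∀ t ∈ Ioc 0 T, ∀ x y, 0 ≤ y → SmoothAt U t x y
  cont : ContinuousOn (fun q : ℝ × ℝ × ℝ => U q.1 q.2.1 q.2.2) (dom T)
  bdd : ∃ C : ℝ, ∀ t ∈ Icc 0 T, ∀ x y, 0 ≤ y → |U t x y| ≤ C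

theorem Regular.add {T : ℝ} {U V : ℝ → ℝ → ℝ → ℝ} (hU : Regular T U) (hV : Regular T V) :
    Regular T (fun t x y => U t x y + V t x y) where
  smooth t ht x y hy := (hU.smooth t ht x y hy).add (hV.smooth t ht x y hy)
  cont := hU.cont.add hV.cont
  bdd := by
    obtain ⟨C, hC⟩ := hU.bdd
    obtain ⟨D, hD⟩ := hV.bdd
    exact ⟨C + D, fun t ht x y hy => (abs_add_le _ _).trans
      (add_le_add (hC t ht x y hy) (hD t ht x y hy))⟩

theorem Regular.const_mul {T : ℝ} {U : ℝ → ℝ → ℝ → ℝ} (k : ℝ) (hU : Regular T U) :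
    Regular T (fun t x y => k * U t x y) where
  smooth t ht x y hy := (hU.smooth t ht x y hy).const_mul k
  cont := continuousOn_const.mul hU.cont
  bdd := by
    obtain ⟨C, hC⟩ := hU.bdd
    refine ⟨|k| * C, fun t ht x y hy => ?_⟩
    rw [abs_mul]
    exact mul_le_mul_of_nonneg_left (hC t ht x y hy) (abs_nonneg k)

theorem Regular.zero (T : ℝ) : Regular T (fun _ _ _ => 0) where
  smooth _ _ _ _ _ := contDiffAt_const
  cont := continuousOn_const
  bdd := ⟨0, by simp⟩

theorem norm_expIpx (p x : ℝ) : ‖Complex.exp (Complex.I * p * x)‖ = 1 := by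
  rw [Complex.norm_exp]; simp

theorem abs_wave_le (p : ℝ) (G : ℝ → ℝ → ℂ) (t x y : ℝ) : |wave p G t x y| ≤ ‖G t y‖ := by
  refine (Complex.abs_re_le_norm _).trans ?_
  rw [norm_mul, norm_expIpx, one_mul]

theorem regular_wave {T p : ℝ} {G : ℝ → ℝ → ℂ} {C : ℝ}
    (hs : ∀ t ∈ Ioc 0 T, ∀ y, 0 ≤ y → ContDiffAt ℝ 2 (fun q : ℝ × ℝ => G q.1 q.2) (t, y))
    (hc : Continuous fun q : ℝ × ℝ => G q.1 q.2)
    (hC : ∀ t ∈ Icc 0 T, ∀ y, 0 ≤ y → ‖G t y‖ ≤ C) : Regular T (wave p G) where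
  smooth t ht x y hy := wave_smoothAt x (hs t ht y hy)
  cont := by
    apply Continuous.continuousOn
    have h1 : Continuous fun q : ℝ × ℝ × ℝ => G q.1 q.2.2 :=
      hc.comp (by fun_prop : Continuous fun q : ℝ × ℝ × ℝ => (q.1, q.2.2))
    unfold wave
    fun_prop
  bdd := ⟨C, fun t ht x y hy => (abs_wave_le p G t x y).trans (hC t ht y hy)⟩

/-- The elementary functions `Re (γ e^{κt} e^{ipx} e^{-ny})`. -/
noncomputable def mode (γ : ℂ) (κ p n : ℝ) : ℝ → ℝ → ℝ → ℝ :=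
  wave p fun t y => γ * Complex.exp (κ * t - n * y)

/-- The affine transform solves the homogeneous equation with initial value a mode. -/
theorem exists_homogeneous (P : HestonCoeffs) (ha : 0 ≤ P.a) (hρ : -1 < P.ρ ∧ P.ρ < 1) (T : ℝ)
    (γ : ℂ) (κ p : ℝ) {n : ℝ} (hn : 0 ≤ n) :
    ∃ U, Regular T U ∧ (∀ t ∈ Ioc 0 T, ∀ x y, 0 ≤ y → heatOp P U t x y = 0) ∧
      ∀ x y, U 0 x y = mode γ κ p n 0 x y := by
  obtain ⟨A, B, h⟩ := exists_affineExponent P ha hρ p hn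
  have hofR : ∀ k, ContDiff ℝ k (fun s : ℝ => (s : ℂ)) := fun k => Complex.ofRealCLM.contDiff
  refine ⟨wave p fun t y => γ * Complex.exp (A t + B t * y), regular_wave
    (C := ‖γ‖ * Real.exp (|P.ϱ| * T)) ?_ ?_ ?_, ?_, ?_⟩
  · intro t ht y _
    have h1 : ContDiffAt ℝ 2 (fun q : ℝ × ℝ => A q.1) (t, y) :=
      ContDiffAt.comp (g := A) (f := Prod.fst) (t, y) (h.smoothA t ht.1) contDiffAt_fst
    have h2 : ContDiffAt ℝ 2 (fun q : ℝ × ℝ => B q.1) (t, y) :=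
      ContDiffAt.comp (g := B) (f := Prod.fst) (t, y) (h.smoothB t ht.1) contDiffAt_fst
    have h3 : ContDiffAt ℝ 2 (fun q : ℝ × ℝ => (q.2 : ℂ)) (t, y) :=
      ((hofR 2).comp contDiff_snd).contDiffAt
    exact contDiffAt_const.mul (h1.add (h2.mul h3)).cexp
  · have := h.contA
    have := h.contB
    fun_prop
  · intro t ht y hy
    rw [norm_mul, Complex.norm_exp]
    gcongr
    have h1 := mul_nonpos_of_nonpos_of_nonneg (h.re_B t) hy
    have h2 := h.re_A t ht.1
    have h3 : P.ϱ * t ≤ |P.ϱ| * T := mul_le_mul (le_abs_self _) ht.2 ht.1 (abs_nonneg _)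
    simp only [Complex.add_re, Complex.re_mul_ofReal]
    linarith
  · intro t ht x y _
    have hG : ∀ s y : ℝ, HasDerivAt (fun y : ℝ => γ * Complex.exp (A s + B s * y))
        (γ * (Complex.exp (A s + B s * y) * B s)) y := by
      intro s y
      have h1 : HasDerivAt (fun y : ℝ => A s + B s * (y : ℂ)) (B s) y := by
        simpa using ((Complex.ofRealCLM.hasDerivAt (x := y)).const_mul (B s)).const_add (A s)
      exact h1.cexp.const_mul γ
    have hGt := (((h.derivA t ht.1).add ((h.derivB t ht.1).mul_const (y : ℂ))).cexp).const_mul γ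
    have hGyy : HasDerivAt (fun y : ℝ => γ * (Complex.exp (A t + B t * y) * B t))
        (γ * (Complex.exp (A t + B t * y) * B t) * B t) y := by
      have := (hG t y).mul_const (B t)
      simpa only [mul_assoc] using this
    rw [heatOp_wave P p _ (fun t y => γ * (Complex.exp (A t + B t * y) * B t)) t x y _ _ hGt
      (hG t) hGyy]
    simp only [Pi.add_apply]
    rw [show (0 : ℝ) = (0 : ℂ).re from rfl]
    congr 1
    ring
  · intro x y
    simp only [mode, wave, h.A_zero, h.B_zero]
    push_cast
    ring_nf

/-- Differentiation in `y` under the truncated resolvent integral brings down a factor `B`. -/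
theorem hasDerivAt_laplace {A B : ℝ → ℂ} (hA : Continuous A) (hB : Continuous B) (κ R : ℝ)
    (k : ℕ) (y : ℝ) :
    HasDerivAt (fun y : ℝ => ∫ r in (0:ℝ)..R, B r ^ k * Complex.exp (-κ * r + A r + B r * y))
      (∫ r in (0:ℝ)..R, B r ^ (k + 1) * Complex.exp (-κ * r + A r + B r * y)) y := by
  have hc : ∀ k : ℕ, Continuous fun q : ℝ × ℝ =>
      B q.2 ^ k * Complex.exp (-κ * q.2 + A q.2 + B q.2 * q.1) := by
    intro k; fun_prop
  have hc' : ∀ (k : ℕ) (y : ℝ), Continuous fun r : ℝ =>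
      B r ^ k * Complex.exp (-κ * r + A r + B r * y) := by
    intro k y; fun_prop
  obtain ⟨M, hM⟩ := ((isCompact_closedBall y 1).prod
    (isCompact_uIcc (a := (0:ℝ)) (b := R))).exists_bound_of_continuousOn
    (hc (k + 1)).continuousOn
  refine (intervalIntegral.hasDerivAt_integral_of_dominated_loc_of_deriv_le
    (bound := fun _ => M)
    (F := fun y r => B r ^ k * Complex.exp (-κ * r + A r + B r * (y : ℝ)))
    (F' := fun y r => B r ^ (k + 1) * Complex.exp (-κ * r + A r + B r * (y : ℝ)))
    (Metric.ball_mem_nhds y one_pos) ?_ ?_ ?_ ?_ ?_ ?_).2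
  · exact Eventually.of_forall fun y => (hc' k y).aestronglyMeasurable
  · exact (hc' k y).intervalIntegrable _ _
  · exact (hc' (k + 1) y).aestronglyMeasurable
  · refine Eventually.of_forall fun r hr y' hy' => ?_
    exact hM (y', r) ⟨Metric.ball_subset_closedBall hy', uIoc_subset_uIcc hr⟩
  · exact intervalIntegrable_const
  · refine Eventually.of_forall fun r _ y' _ => ?_
    have h1 : HasDerivAt (fun y : ℝ => -κ * r + A r + B r * (y : ℂ)) (B r) y' := by
      simpa using ((Complex.ofRealCLM.hasDerivAt (x := y')).const_mul (B r)).const_add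
        (-κ * r + A r)
    refine (h1.cexp.const_mul (B r ^ k)).congr_deriv ?_
    ring

/-- For `κ > ϱ` the resolvent `∫₀^∞ e^{-κr} (affine transform at time r) dr`, truncated at a large
time and multiplied by `e^{κt}`, solves the equation with a mode as source up to a small error. -/
theorem exists_source (P : HestonCoeffs) (ha : 0 ≤ P.a) (hρ : -1 < P.ρ ∧ P.ρ < 1) (T : ℝ)
    (γ : ℂ) {κ : ℝ} (hκ : P.ϱ < κ) (p : ℝ) {n : ℝ} (hn : 0 ≤ n) {δ : ℝ} (hδ : 0 < δ) :
    ∃ U, Regular T U ∧ ∀ t ∈ Ioc 0 T, ∀ x y, 0 ≤ y →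
      |heatOp P U t x y - mode γ κ p n t x y| ≤ δ := by
  obtain ⟨A, B, h⟩ := exists_affineExponent P ha hρ p hn
  have hcA := h.contA
  have hcB := h.contB
  obtain ⟨R, hR0, hR⟩ : ∃ R : ℝ, 0 < R ∧
      ‖γ‖ * Real.exp (|κ| * T) * Real.exp (-((κ - P.ϱ) * R)) ≤ δ := by
    have h1 : Tendsto (fun R : ℝ => ‖γ‖ * Real.exp (|κ| * T) * Real.exp (-((κ - P.ϱ) * R))) atTop
        (𝓝 (‖γ‖ * Real.exp (|κ| * T) * 0)) :=
      (Real.tendsto_exp_neg_atTop_nhds_zero.comp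
        (tendsto_id.const_mul_atTop (sub_pos.2 hκ))).const_mul _
    rw [mul_zero] at h1
    obtain ⟨R, h2, h3⟩ := ((h1.eventually (ge_mem_nhds hδ)).and (eventually_gt_atTop 0)).exists
    exact ⟨R, h3, h2⟩
  set E : ℝ → ℝ → ℂ := fun y r => Complex.exp (-κ * r + A r + B r * y) with hE
  have hEn : ∀ r y, 0 ≤ r → 0 ≤ y → ‖E y r‖ ≤ Real.exp (-((κ - P.ϱ) * r)) := by
    intro r y hr hy
    rw [hE, Complex.norm_exp]
    apply Real.exp_le_exp.2
    have h1 := mul_nonpos_of_nonpos_of_nonneg (h.re_B r) hy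
    have h2 := h.re_A r hr
    simp only [Complex.add_re, Complex.re_mul_ofReal, Complex.neg_re, Complex.ofReal_re]
    linarith
  set g : ℕ → ℝ → ℂ := fun k y => ∫ r in (0:ℝ)..R, B r ^ k * E y r with hg
  have hgd : ∀ k y, HasDerivAt (g k) (g (k + 1) y) y := fun k y =>
    hasDerivAt_laplace hcA hcB κ R k y
  have hgs : ContDiff ℝ 2 (g 0) := by
    have hgc : ∀ k, Continuous (g k) := fun k =>
      continuous_iff_continuousAt.2 fun y => (hgd k y).continuousAt
    have hgs' : ∀ j k : ℕ, ContDiff ℝ j (g k) := by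
      intro j
      induction j with
      | zero => intro k; simpa using hgc k
      | succ j ih =>
        intro k
        push_cast
        rw [contDiff_succ_iff_deriv, show deriv (g k) = g (k + 1) from
          funext fun y => (hgd k y).deriv]
        exact ⟨fun y => (hgd k y).differentiableAt, fun h => absurd h (by simp), ih _⟩
    exact_mod_cast hgs' 2 0
  have hgn : ∀ y, 0 ≤ y → ‖g 0 y‖ ≤ R := by
    intro y hy
    have h1 : ‖g 0 y‖ ≤ 1 * |R - 0| := by
      apply intervalIntegral.norm_integral_le_of_norm_le_const
      intro r hr
      rw [uIoc_of_le hR0.le] at hr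
      rw [pow_zero, one_mul]
      refine (hEn r y hr.1.le hy).trans (Real.exp_le_one_iff.2 ?_)
      have := mul_nonneg (sub_pos.2 hκ).le hr.1.le
      linarith
    simpa [abs_of_pos hR0] using h1
  have hofR : ∀ k, ContDiff ℝ k (fun s : ℝ => (s : ℂ)) := fun k => Complex.ofRealCLM.contDiff
  have hexp : ∀ t ∈ Icc 0 T, ‖γ * Complex.exp (κ * t)‖ ≤ ‖γ‖ * Real.exp (|κ| * T) := by
    intro t ht
    rw [norm_mul, Complex.norm_exp]
    gcongr
    rw [Complex.re_mul_ofReal, Complex.ofReal_re]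
    exact mul_le_mul (le_abs_self _) ht.2 ht.1 (abs_nonneg _)
  -- The affine transform satisfies `∂ᵣE = 𝓛E + (ϱ - κ)E`; integrated over `[0, R]`.
  have hftc : ∀ y : ℝ, E y R - E y 0 = ((Complex.I * P.c * p + P.ϱ - κ) * g 0 y + P.a * g 1 y)
      + y * ((P.sig ^ 2 / 2) * g 2 y + (Complex.I * P.ρ * P.lam * P.sig * p - P.b) * g 1 y
        + (Complex.I * P.d * p - P.lam ^ 2 * p ^ 2 / 2) * g 0 y) := by
    intro y
    have hEc : Continuous (E y) := by simp only [hE]; fun_prop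
    have hi : ∀ k, IntervalIntegrable (fun r => B r ^ k * E y r) volume 0 R := fun k =>
      ((hcB.pow k).mul hEc).intervalIntegrable _ _
    have h1 : ∀ r ∈ Ioo 0 R, HasDerivAt (E y)
        (((Complex.I * P.c * p + P.ϱ - κ) * (B r ^ 0 * E y r) + P.a * (B r ^ 1 * E y r))
      + y * ((P.sig ^ 2 / 2) * (B r ^ 2 * E y r)
        + (Complex.I * P.ρ * P.lam * P.sig * p - P.b) * (B r ^ 1 * E y r)
        + (Complex.I * P.d * p - P.lam ^ 2 * p ^ 2 / 2) * (B r ^ 0 * E y r))) r := by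
      intro r hr
      have h2 : HasDerivAt (fun r : ℝ => -κ * (r : ℂ)) (-κ * 1) r :=
        (Complex.ofRealCLM.hasDerivAt (x := r)).const_mul _
      refine ((h2.add (h.derivA r hr.1)).add
        ((h.derivB r hr.1).mul_const (y : ℂ))).cexp.congr_deriv ?_
      simp only [hE, Pi.add_apply]
      ring
    have h2 := intervalIntegral.integral_eq_sub_of_hasDerivAt_of_le hR0.le hEc.continuousOn h1
      (Continuous.intervalIntegrable (by fun_prop) _ _)
    rw [← h2, intervalIntegral.integral_add, intervalIntegral.integral_add,
      intervalIntegral.integral_const_mul, intervalIntegral.integral_const_mul,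
      intervalIntegral.integral_const_mul, intervalIntegral.integral_add,
      intervalIntegral.integral_add, intervalIntegral.integral_const_mul,
      intervalIntegral.integral_const_mul, intervalIntegral.integral_const_mul]
    all_goals exact Continuous.intervalIntegrable (by fun_prop) _ _
  refine ⟨wave p fun t y => γ * Complex.exp (κ * t) * g 0 y, regular_wave
    (C := ‖γ‖ * Real.exp (|κ| * T) * R) ?_ ?_ ?_, ?_⟩
  · intro t _ y _
    have h1 : ContDiff ℝ 2 (fun q : ℝ × ℝ => (q.1 : ℂ)) := (hofR 2).comp contDiff_fst
    have h2 : ContDiff ℝ 2 (fun q : ℝ × ℝ => g 0 q.2) := hgs.comp contDiff_snd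
    exact ((contDiff_const.mul (contDiff_const.mul h1).cexp).mul h2).contDiffAt
  · have := hgs.continuous
    fun_prop
  · intro t ht y hy
    rw [norm_mul]
    exact mul_le_mul (hexp t ht) (hgn y hy) (norm_nonneg _) (by positivity)
  · intro t ht x y hy
    have hGt : HasDerivAt (fun s : ℝ => γ * Complex.exp (κ * s) * g 0 y)
        (γ * (Complex.exp (κ * t) * κ) * g 0 y) t := by
      have h1 : HasDerivAt (fun s : ℝ => (κ : ℂ) * (s : ℂ)) (κ * 1) t :=
        (Complex.ofRealCLM.hasDerivAt (x := t)).const_mul _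
      rw [mul_one] at h1
      exact (h1.cexp.const_mul γ).mul_const _
    rw [heatOp_wave P p _ (fun t y => γ * Complex.exp (κ * t) * g 1 y) t x y _ _ hGt
      (fun y' => (hgd 0 y').const_mul _) ((hgd 1 y).const_mul _)]
    have hsplit : Complex.exp (κ * t - n * y) = Complex.exp (κ * t) * E y 0 := by
      simp only [hE, h.A_zero, h.B_zero, ← Complex.exp_add]
      push_cast
      ring_nf
    rw [mode, wave, hsplit, ← Complex.sub_re]
    refine (Complex.abs_re_le_norm _).trans ?_
    have hkey : ∀ e : ℂ, e * (γ * (Complex.exp (κ * t) * κ) * g 0 y - (y / 2) * (P.lam ^ 2 *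
          (-p ^ 2 * (γ * Complex.exp (κ * t) * g 0 y))
        + 2 * P.ρ * P.lam * P.sig * (Complex.I * p * (γ * Complex.exp (κ * t) * g 1 y))
        + P.sig ^ 2 * (γ * Complex.exp (κ * t) * g (1 + 1) y))
        - (P.c + P.d * y) * (Complex.I * p * (γ * Complex.exp (κ * t) * g 0 y))
        - (P.a - P.b * y) * (γ * Complex.exp (κ * t) * g 1 y)
        - P.ϱ * (γ * Complex.exp (κ * t) * g 0 y)) - e * (γ * (Complex.exp (κ * t) * E y 0))
        = - (e * ((γ * Complex.exp (κ * t)) * E y R)) := by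
      intro e
      rw [← sub_add_cancel (E y R) (E y 0), hftc y]
      ring
    rw [hkey, norm_neg, norm_mul, norm_expIpx, one_mul, norm_mul]
    exact (mul_le_mul (hexp t ⟨ht.1.le, ht.2⟩) (hEn R y hR0.le hy) (norm_nonneg _)
      (by positivity)).trans hR

/-! ### Weighted density of the modes -/

/-- The real span of the modes with time exponents in `κ₀ + ℕ`. -/
def modeSpan (κ₀ : ℝ) : Submodule ℝ (ℝ → ℝ → ℝ → ℝ) :=
  Submodule.span ℝ {φ | ∃ (γ : ℂ) (k : ℕ) (p : ℝ) (n : ℕ), φ = mode γ (κ₀ + k) p n}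

/-- The compact space `[0,T] × 𝕊¹ × [0,1]` carrying the variables `t`, `e^{ix/R}` and `e^{-y}`. -/
abbrev ModeSpace (T : ℝ) : Type := Icc (0 : ℝ) T × Circle × Icc (0 : ℝ) 1

/-- The monomial `e^{kt} u^j z^n` on `[0,T] × 𝕊¹ × [0,1]`. -/
noncomputable def modeMonomial (T : ℝ) (i : ℕ × ℤ × ℕ) : C(ModeSpace T, ℂ) where
  toFun q := ((Real.exp (i.1 * q.1) : ℝ) : ℂ) * ((q.2.1 ^ i.2.1 : Circle) : ℂ)
    * (((q.2.2 : ℝ) ^ i.2.2 : ℝ) : ℂ)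
  continuous_toFun := by
    have h0 : Continuous fun q : ModeSpace T => (q.2.1 ^ i.2.1 : Circle) :=
      (continuous_fst.comp continuous_snd).zpow _
    have h1 : Continuous fun q : ModeSpace T => ((q.2.1 ^ i.2.1 : Circle) : ℂ) :=
      continuous_subtype_val.comp h0
    exact (Continuous.mul (by fun_prop) h1).mul (by fun_prop)

/-- The monomials form a multiplicative monoid stable under conjugation, hence span a star
subalgebra. -/
noncomputable def modeAlgebra (T : ℝ) : StarSubalgebra ℂ C(ModeSpace T, ℂ) where
  toSubalgebra := Algebra.adjoin ℂ (range (modeMonomial T))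
  star_mem' := by
    change Algebra.adjoin ℂ (range (modeMonomial T)) ≤
      star (Algebra.adjoin ℂ (range (modeMonomial T)))
    refine Algebra.adjoin_le ?_
    rintro - ⟨⟨k, j, n⟩, rfl⟩
    refine Algebra.subset_adjoin ⟨(k, -j, n), ContinuousMap.ext fun q => ?_⟩
    simp [modeMonomial, ← Circle.coe_inv_eq_conj, -Complex.ofReal_exp]

theorem modeAlgebra_coe (T : ℝ) :
    Subalgebra.toSubmodule (modeAlgebra T).toSubalgebra
      = Submodule.span ℂ (range (modeMonomial T)) := by
  apply Algebra.adjoin_eq_span_of_subset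
  refine Subset.trans ?_ Submodule.subset_span
  intro f hf
  refine Submonoid.closure_induction (fun _ => id) ⟨0, ?_⟩ ?_ hf
  · ext q; simp [modeMonomial]
  · rintro - - - - ⟨⟨k, j, n⟩, rfl⟩ ⟨⟨k', j', n'⟩, rfl⟩
    refine ⟨(k + k', j + j', n + n'), ?_⟩
    ext q
    simp only [modeMonomial, ContinuousMap.coe_mk, ContinuousMap.mul_apply, zpow_add, pow_add,
      Circle.coe_mul, Nat.cast_add, add_mul, Real.exp_add, Complex.ofReal_mul]
    ring

theorem modeAlgebra_separates (T : ℝ) : (modeAlgebra T).SeparatesPoints := by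
  have hmem : ∀ i, modeMonomial T i ∈ (modeAlgebra T).toSubalgebra := fun i =>
    Algebra.subset_adjoin ⟨i, rfl⟩
  rintro ⟨t, u, z⟩ ⟨t', u', z'⟩ hne
  by_contra! hcon
  have h0 : ∀ i, modeMonomial T i (t, u, z) = modeMonomial T i (t', u', z') := fun i =>
    hcon _ ⟨_, hmem i, rfl⟩
  have h1 := h0 (1, 0, 0)
  have h2 := h0 (0, 1, 0)
  have h3 := h0 (0, 0, 1)
  simp [modeMonomial, -Complex.ofReal_exp] at h1 h2 h3
  apply hne
  ext <;> simp [*]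

/-- Stone–Weierstrass on `[0,T] × 𝕊¹ × [0,1]`. -/
theorem exists_span_near (T : ℝ) (F : C(ModeSpace T, ℂ)) {ε : ℝ} (hε : 0 < ε) :
    ∃ s ∈ Submodule.span ℂ (range (modeMonomial T)), ∀ q, ‖F q - s q‖ ≤ ε := by
  have h1 : F ∈ (modeAlgebra T).topologicalClosure := by
    rw [ContinuousMap.starSubalgebra_topologicalClosure_eq_top_of_separatesPoints _
      (modeAlgebra_separates T)]
    exact StarSubalgebra.mem_top
  have h2 : F ∈ closure ((modeAlgebra T : StarSubalgebra ℂ C(ModeSpace T, ℂ)) : Set _) := by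
    rwa [← StarSubalgebra.topologicalClosure_coe]
  obtain ⟨s, hs, hd⟩ := Metric.mem_closure_iff.1 h2 ε hε
  refine ⟨s, ?_, fun q => ?_⟩
  · rw [← modeAlgebra_coe]; exact hs
  · rw [← dist_eq_norm]
    exact (ContinuousMap.dist_apply_le_dist q).trans hd.le

/-- The point of `[0,T] × 𝕊¹ × [0,1]` associated with `(t, x, y)`. -/
noncomputable def toModeSpace {T : ℝ} (R : ℝ) (t : Icc (0 : ℝ) T) (x : ℝ) (y : Ici (0 : ℝ)) :
    ModeSpace T :=
  (t, Circle.exp (x / R), ⟨Real.exp (-(y : ℝ)), (Real.exp_pos _).le,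
    Real.exp_le_one_iff.2 (neg_nonpos.2 y.2)⟩)

/-- Pulled back to the variables `(t, x, y)` and multiplied by `e^{κ₀t}`, the real part of a
combination of monomials is a combination of modes. The factor `γ` makes the statement stable under
complex scalars, which do not commute with real parts. -/
theorem exists_modeSpan_eq {T : ℝ} (κ₀ R : ℝ) {s : C(ModeSpace T, ℂ)}
    (hs : s ∈ Submodule.span ℂ (range (modeMonomial T))) :
    ∀ γ : ℂ, ∃ τ ∈ modeSpan κ₀, ∀ (t : Icc (0 : ℝ) T) (x : ℝ) (y : Ici (0 : ℝ)),
      τ t x y = Real.exp (κ₀ * t) * (γ * s (toModeSpace R t x y)).re := by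
  induction hs using Submodule.span_induction with
  | mem s hs =>
    obtain ⟨⟨k, j, n⟩, rfl⟩ := hs
    intro γ
    refine ⟨_, Submodule.subset_span ⟨γ, k, j / R, n, rfl⟩, fun t x y => ?_⟩
    rw [mode, wave, ← Complex.re_ofReal_mul]
    congr 1
    have h1 : Complex.exp (Complex.I * ((j / R : ℝ) : ℂ) * x)
        = ((Circle.exp (x / R) ^ j : Circle) : ℂ) := by
      rw [Circle.coe_zpow, Circle.coe_exp, ← Complex.exp_int_mul]
      push_cast
      ring_nf
    have h2 : Complex.exp (((κ₀ + k : ℝ) : ℂ) * ((t : ℝ) : ℂ) - ((n : ℝ) : ℂ) * ((y : ℝ) : ℂ))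
        = (Real.exp (κ₀ * t) : ℝ) * (Real.exp (k * t) : ℝ)
          * (((Real.exp (-(y : ℝ))) ^ n : ℝ) : ℂ) := by
      simp only [Complex.ofReal_exp, Complex.ofReal_pow, ← Complex.exp_nat_mul, ← Complex.exp_add]
      push_cast
      ring_nf
    rw [h1, h2]
    simp only [modeMonomial, toModeSpace, ContinuousMap.coe_mk]
    ring
  | zero => exact fun γ => ⟨0, Submodule.zero_mem _, by simp⟩
  | add s s' _ _ ih ih' =>
    intro γ
    obtain ⟨τ, hτ, h⟩ := ih γ
    obtain ⟨τ', hτ', h'⟩ := ih' γ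
    refine ⟨τ + τ', Submodule.add_mem _ hτ hτ', fun t x y => ?_⟩
    simp only [Pi.add_apply, h, h', ContinuousMap.add_apply, mul_add, Complex.add_re]
  | smul a s _ ih =>
    intro γ
    obtain ⟨τ, hτ, h⟩ := ih (γ * a)
    refine ⟨τ, hτ, fun t x y => ?_⟩
    rw [h, ContinuousMap.smul_apply, smul_eq_mul, mul_assoc]

/-- On the box `|x| ≤ R`, `y ≤ R` the map to `[0,T] × 𝕊¹ × [0,1]` is a closed embedding, so by the
Tietze theorem a function bounded by `M` there is uniformly close, on the box, to the real part of
a combination of monomials that is globally bounded by `M` up to the same error. -/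
theorem exists_span_box (T : ℝ) {R M : ℝ} (hR : 1 ≤ R) (hM : 0 ≤ M) {g : ℝ → ℝ → ℝ → ℝ}
    (hg : ContinuousOn (fun q : ℝ × ℝ × ℝ => g q.1 q.2.1 q.2.2) (dom T))
    (hgM : ∀ t ∈ Icc 0 T, ∀ x ∈ Icc (-R) R, ∀ y ∈ Icc 0 R, |g t x y| ≤ M)
    {ε : ℝ} (hε : 0 < ε) :
    ∃ s ∈ Submodule.span ℂ (range (modeMonomial T)), (∀ q, |(s q).re| ≤ M + ε) ∧
      ∀ (t : Icc (0 : ℝ) T) (x : ℝ) (y : Ici (0 : ℝ)), x ∈ Icc (-R) R → (y : ℝ) ≤ R →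
        |g t x y - (s (toModeSpace R t x y)).re| ≤ ε := by
  have hR0 : 0 < R := by linarith
  let e : Icc (0 : ℝ) T × Icc (-R) R × Icc (0 : ℝ) R → ModeSpace T := fun q => toModeSpace R q.1 q.2.1 ⟨q.2.2, q.2.2.2.1⟩
  have he : IsClosedEmbedding e := by
    apply Continuous.isClosedEmbedding
    · simp only [e, toModeSpace]
      fun_prop
    · rintro ⟨t, x, y⟩ ⟨t', x', y'⟩ h
      simp only [e, toModeSpace, Prod.mk.injEq] at h
      obtain ⟨h1, h2, h3⟩ := h
      have hx : ∀ x : Icc (-R) R, Complex.arg (Circle.exp ((x : ℝ) / R)) = x / R := by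
        intro x
        have h4 : (x : ℝ) / R ≤ 1 := (div_le_one hR0).2 x.2.2
        have h5 : -1 ≤ (x : ℝ) / R := by
          rw [le_div_iff₀ hR0]; linarith [x.2.1]
        have h6 := Real.pi_gt_three
        exact Circle.arg_exp (by linarith) (by linarith)
      have h7 : (x : ℝ) / R = x' / R := by rw [← hx x, ← hx x', h2]
      have h8 : (x : ℝ) = x' := by
        field_simp at h7; exact h7
      have h9 : (y : ℝ) = y' := neg_injective (Real.exp_injective (congrArg Subtype.val h3))
      rw [h1, Subtype.ext h8, Subtype.ext h9]
  let F₀ : C(Icc (0 : ℝ) T × Icc (-R) R × Icc (0 : ℝ) R, ℝ) := ⟨fun q => g q.1 q.2.1 q.2.2, by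
    apply hg.comp_continuous (f := fun q : Icc (0 : ℝ) T × Icc (-R) R × Icc (0 : ℝ) R =>
      ((q.1 : ℝ), (q.2.1 : ℝ), (q.2.2 : ℝ)))
    · fun_prop
    · exact fun q => mem_dom.2 ⟨q.1.2, q.2.2.2.1⟩⟩
  obtain ⟨F, hFM, hF⟩ := F₀.exists_extension_forall_mem_of_isClosedEmbedding (t := Icc (-M) M)
    (fun q => abs_le.1 (hgM _ q.1.2 _ q.2.1.2 _ q.2.2.2)) ⟨0, by simpa using hM⟩ he
  obtain ⟨s, hs, hd⟩ := exists_span_near T ⟨fun q => ((F q : ℝ) : ℂ), by fun_prop⟩ hε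
  have hd' : ∀ q, |F q - (s q).re| ≤ ε := by
    intro q
    have h1 := (Complex.abs_re_le_norm _).trans (hd q)
    simpa using h1
  refine ⟨s, hs, fun q => ?_, fun t x y hx hy => ?_⟩
  · have h1 := abs_le.1 (hd' q)
    have h2 := hFM q
    exact abs_le.2 ⟨by linarith [h1.2, h2.1], by linarith [h1.1, h2.2]⟩
  · have h1 := congrFun hF (t, ⟨x, hx⟩, ⟨y, y.2, hy⟩)
    have h2 : F (toModeSpace R t x y) = g t x y := h1
    rw [← h2]
    exact hd' _

theorem one_le_weight (m : ℕ) (x y : ℝ) : 1 ≤ weight m x y := by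
  have h1 : 0 ≤ x ^ (2 * m) := (even_two_mul m).pow_nonneg x
  have h2 : 0 ≤ y ^ (2 * m) := (even_two_mul m).pow_nonneg y
  unfold weight; linarith

/-- Outside a large box the weight `1 + x^{2m} + y^{2m}` absorbs both the given function, of growth
`2m - 1`, and the approximant, bounded by the maximum of the function over the box. -/
theorem exists_mode_approx (T κ₀ : ℝ) {m : ℕ} (hm : 1 ≤ m) {g : ℝ → ℝ → ℝ → ℝ}
    (hg : ContinuousOn (fun q : ℝ × ℝ × ℝ => g q.1 q.2.1 q.2.2) (dom T)) {C : ℝ} (hC0 : 0 ≤ C)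
    (hC : ∀ t ∈ Icc 0 T, ∀ x y, 0 ≤ y → |g t x y| ≤ C * size x y ^ (2 * m - 1))
    {ε : ℝ} (hε : 0 < ε) :
    ∃ τ ∈ modeSpan κ₀, ∀ t ∈ Icc 0 T, ∀ x y, 0 ≤ y → |g t x y - τ t x y| ≤ ε * weight m x y := by
  set M : ℝ := Real.exp (|κ₀| * T) with hM
  have hM0 : 0 < M := Real.exp_pos _
  have hexp : ∀ t ∈ Icc 0 T, Real.exp (κ₀ * t) ≤ M := fun t ht =>
    Real.exp_le_exp.2 (mul_le_mul (le_abs_self _) ht.2 ht.1 (abs_nonneg _))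
  have hexp' : ∀ t ∈ Icc 0 T, Real.exp (-κ₀ * t) ≤ M := fun t ht =>
    Real.exp_le_exp.2 (mul_le_mul (neg_le_abs _) ht.2 ht.1 (abs_nonneg _))
  -- `R` is chosen so that `C s^(2m-1) + sup over the box ≤ ε s^(2m)` as soon as `s ≥ R`.
  set R : ℝ := max 1 ((C + M * (M * C) + ε) / ε) with hR
  have hR1 : 1 ≤ R := le_max_left _ _
  have hRε : C + M * (M * C) + ε ≤ ε * R := by
    rw [← div_le_iff₀' hε]; exact le_max_right _ _
  obtain ⟨s, hs, hsM, hsR⟩ := exists_span_box T (M := M * (C * R ^ (2 * m - 1))) hR1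
    (by positivity) (g := fun t x y => Real.exp (-κ₀ * t) * g t x y)
    (ContinuousOn.mul (by fun_prop) hg) (by
      intro t ht x hx y hy
      rw [abs_mul, abs_of_pos (Real.exp_pos _)]
      have h1 : size x y ≤ R := max_le hR1 (max_le (abs_le.2 hx) hy.2)
      have h2 : (0:ℝ) ≤ size x y := zero_le_one.trans (one_le_size x y)
      gcongr
      · exact hexp' t ht
      · exact (hC t ht x y hy.1).trans (by gcongr)) (div_pos hε hM0)
  obtain ⟨τ, hτ, hτs⟩ := exists_modeSpan_eq κ₀ R hs 1
  refine ⟨τ, hτ, fun t ht x y hy => ?_⟩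
  have hval : τ t x y = Real.exp (κ₀ * t) * (s (toModeSpace R ⟨t, ht⟩ x ⟨y, hy⟩)).re := by
    have := hτs ⟨t, ht⟩ x ⟨y, hy⟩
    simpa only [one_mul] using this
  have hMε : M * (ε / M) = ε := by field_simp
  by_cases hbox : size x y ≤ R
  · have h1 := hsR ⟨t, ht⟩ x ⟨y, hy⟩ (abs_le.1 ((abs_le_size x y).trans hbox))
      ((le_size x y).trans hbox)
    have h2 : g t x y - τ t x y = Real.exp (κ₀ * t) * (Real.exp (-κ₀ * t) * g t x y
        - (s (toModeSpace R ⟨t, ht⟩ x ⟨y, hy⟩)).re) := by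
      rw [hval, mul_sub, ← mul_assoc, ← Real.exp_add]
      simp
    rw [h2, abs_mul, abs_of_pos (Real.exp_pos _)]
    calc _ ≤ M * (ε / M) := mul_le_mul (hexp t ht) h1 (abs_nonneg _) hM0.le
      _ = ε * 1 := by rw [hMε, mul_one]
      _ ≤ _ := by gcongr; exact one_le_weight m x y
  · rw [not_le] at hbox
    have h0 := one_le_size x y
    have hp1 : 1 ≤ size x y ^ (2 * m - 1) := one_le_pow₀ h0
    have h1 : |τ t x y| ≤ M * (M * (C * size x y ^ (2 * m - 1)) + ε / M) := by
      rw [hval, abs_mul, abs_of_pos (Real.exp_pos _)]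
      refine mul_le_mul (hexp t ht) ((hsM _).trans ?_) (abs_nonneg _) hM0.le
      gcongr
    calc |g t x y - τ t x y| ≤ |g t x y| + |τ t x y| := abs_sub _ _
      _ ≤ C * size x y ^ (2 * m - 1) + M * (M * (C * size x y ^ (2 * m - 1)) + ε / M) :=
        add_le_add (hC t ht x y hy) h1
      _ = (C + M * (M * C)) * size x y ^ (2 * m - 1) + ε * 1 := by rw [mul_add M, hMε]; ring
      _ ≤ (C + M * (M * C)) * size x y ^ (2 * m - 1) + ε * size x y ^ (2 * m - 1) := by gcongr
      _ = (C + M * (M * C) + ε) * size x y ^ (2 * m - 1) := by ring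
      _ ≤ (ε * R) * size x y ^ (2 * m - 1) := by gcongr
      _ ≤ (ε * size x y) * size x y ^ (2 * m - 1) := by gcongr
      _ = ε * size x y ^ (2 * m) := by
        rw [mul_assoc, ← pow_succ', show 2 * m - 1 + 1 = 2 * m by omega]
      _ ≤ _ := by gcongr; exact size_pow_le_weight m x y

/-! ### Approximate solutions with prescribed data -/

theorem exists_source_of_modeSpan (P : HestonCoeffs) (ha : 0 ≤ P.a) (hρ : -1 < P.ρ ∧ P.ρ < 1)
    (T : ℝ) {κ₀ : ℝ} (hκ : P.ϱ < κ₀) {τ : ℝ → ℝ → ℝ → ℝ} (hτ : τ ∈ modeSpan κ₀) :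
    ∀ δ > 0, ∃ U, Regular T U ∧ ∀ t ∈ Ioc 0 T, ∀ x y, 0 ≤ y →
      |heatOp P U t x y - τ t x y| ≤ δ := by
  induction hτ using Submodule.span_induction with
  | mem τ hτ =>
    obtain ⟨γ, k, p, n, rfl⟩ := hτ
    intro δ hδ
    exact exists_source P ha hρ T γ (lt_add_of_lt_of_nonneg hκ k.cast_nonneg) p n.cast_nonneg hδ
  | zero =>
    intro δ hδ
    refine ⟨_, Regular.zero T, fun t _ x y _ => ?_⟩
    simpa [heatOp, pdT, pdX, pdY, pdXX, pdXY, pdYY] using hδ.le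
  | add τ τ' _ _ ih ih' =>
    intro δ hδ
    obtain ⟨U, hU, h⟩ := ih (δ / 2) (half_pos hδ)
    obtain ⟨U', hU', h'⟩ := ih' (δ / 2) (half_pos hδ)
    refine ⟨_, hU.add hU', fun t ht x y hy => ?_⟩
    rw [heatOp_add P (hU.smooth t ht x y hy) (hU'.smooth t ht x y hy), Pi.add_apply, Pi.add_apply,
      Pi.add_apply, add_sub_add_comm]
    linarith [abs_add_le (heatOp P U t x y - τ t x y) (heatOp P U' t x y - τ' t x y),
      h t ht x y hy, h' t ht x y hy]
  | smul r τ _ ih =>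
    intro δ hδ
    have hr : 0 < |r| + 1 := by positivity
    obtain ⟨U, hU, h⟩ := ih (δ / (|r| + 1)) (div_pos hδ hr)
    refine ⟨_, hU.const_mul r, fun t ht x y hy => ?_⟩
    rw [heatOp_const_mul P r (hU.smooth t ht x y hy), Pi.smul_apply, Pi.smul_apply,
      Pi.smul_apply, smul_eq_mul, ← mul_sub, abs_mul]
    calc _ ≤ |r| * (δ / (|r| + 1)) := by gcongr; exact h t ht x y hy
      _ ≤ (|r| + 1) * (δ / (|r| + 1)) := by gcongr; linarith
      _ = δ := by field_simp

theorem exists_homogeneous_of_modeSpan (P : HestonCoeffs) (ha : 0 ≤ P.a)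
    (hρ : -1 < P.ρ ∧ P.ρ < 1) (T κ₀ : ℝ) {τ : ℝ → ℝ → ℝ → ℝ} (hτ : τ ∈ modeSpan κ₀) :
    ∃ U, Regular T U ∧ (∀ t ∈ Ioc 0 T, ∀ x y, 0 ≤ y → heatOp P U t x y = 0) ∧
      ∀ x y, U 0 x y = τ 0 x y := by
  induction hτ using Submodule.span_induction with
  | mem τ hτ =>
    obtain ⟨γ, k, p, n, rfl⟩ := hτ
    exact exists_homogeneous P ha hρ T γ _ p n.cast_nonneg
  | zero =>
    refine ⟨_, Regular.zero T, fun t _ x y _ => ?_, fun x y => rfl⟩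
    simp [heatOp, pdT, pdX, pdY, pdXX, pdXY, pdYY]
  | add τ τ' _ _ ih ih' =>
    obtain ⟨U, hU, h, h0⟩ := ih
    obtain ⟨U', hU', h', h0'⟩ := ih'
    refine ⟨_, hU.add hU', fun t ht x y hy => ?_, fun x y => ?_⟩
    · rw [heatOp_add P (hU.smooth t ht x y hy) (hU'.smooth t ht x y hy), h t ht x y hy,
        h' t ht x y hy, add_zero]
    · simp only [h0, h0', Pi.add_apply]
  | smul r τ _ ih =>
    obtain ⟨U, hU, h, h0⟩ := ih
    refine ⟨_, hU.const_mul r, fun t ht x y hy => ?_, fun x y => ?_⟩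
    · rw [heatOp_const_mul P r (hU.smooth t ht x y hy), h t ht x y hy, mul_zero]
    · simp only [h0, Pi.smul_apply, smul_eq_mul]

/-- Classical solvability of the equation up to weighted errors: first the source term is treated
with arbitrary initial value, then the initial value is corrected by a homogeneous solution. -/
theorem exists_approx_solution (P : HestonCoeffs) (ha : 0 ≤ P.a) (hρ : -1 < P.ρ ∧ P.ρ < 1)
    {T : ℝ} (hT : 0 < T) {m : ℕ} (hm : 1 ≤ m) {k : ℝ → ℝ → ℝ → ℝ} {f : ℝ → ℝ → ℝ}
    (hk : ContinuousOn (fun q : ℝ × ℝ × ℝ => k q.1 q.2.1 q.2.2) (dom T))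
    (hf : ContinuousOn (fun q : ℝ × ℝ => f q.1 q.2) ((univ : Set ℝ) ×ˢ Ici 0))
    {C D : ℝ} (hC0 : 0 ≤ C) (hD0 : 0 ≤ D)
    (hC : ∀ t ∈ Icc 0 T, ∀ x y, 0 ≤ y → |k t x y| ≤ C * size x y ^ (2 * m - 1))
    (hD : ∀ x y, 0 ≤ y → |f x y| ≤ D * size x y ^ (2 * m - 1)) {ε : ℝ} (hε : 0 < ε) :
    ∃ U, Regular T U ∧
      (∀ t ∈ Ioc 0 T, ∀ x y, 0 ≤ y → |heatOp P U t x y + k t x y| ≤ ε * weight m x y) ∧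
      ∀ x y, 0 ≤ y → |f x y - U 0 x y| ≤ ε * weight m x y := by
  have hT0 : (0 : ℝ) ∈ Icc 0 T := ⟨le_rfl, hT.le⟩
  -- Time exponents above `ϱ` make the resolvent of `exists_source` converge.
  obtain ⟨τ, hτ, hτk⟩ := exists_mode_approx T (P.ϱ + 1) hm (g := fun t x y => -k t x y) hk.neg hC0
    (by simpa only [abs_neg] using hC) (half_pos hε)
  obtain ⟨U, hU, hUτ⟩ := exists_source_of_modeSpan P ha hρ T (lt_add_one _) hτ (ε / 2)
    (half_pos hε)
  obtain ⟨B, hB⟩ := hU.bdd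
  have hB0 : 0 ≤ B := (abs_nonneg _).trans (hB 0 hT0 0 0 le_rfl)
  have hcont : ContinuousOn (fun q : ℝ × ℝ × ℝ => f q.2.1 q.2.2 - U 0 q.2.1 q.2.2) (dom T) := by
    apply ContinuousOn.sub
    · exact hf.comp (f := fun q : ℝ × ℝ × ℝ => (q.2.1, q.2.2)) (by fun_prop) fun q hq => hq.2
    · exact hU.cont.comp (f := fun q : ℝ × ℝ × ℝ => ((0 : ℝ), q.2.1, q.2.2)) (by fun_prop)
        fun q hq => ⟨hT0, hq.2⟩
  obtain ⟨τ', hτ', hτf⟩ := exists_mode_approx T 0 hm (g := fun _ x y => f x y - U 0 x y) hcont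
    (add_nonneg hD0 hB0) (by
      intro t ht x y hy
      have h1 : 1 ≤ size x y ^ (2 * m - 1) := one_le_pow₀ (one_le_size x y)
      calc |f x y - U 0 x y| ≤ |f x y| + |U 0 x y| := abs_sub _ _
        _ ≤ D * size x y ^ (2 * m - 1) + B * 1 := by
          rw [mul_one]; exact add_le_add (hD x y hy) (hB 0 hT0 x y hy)
        _ ≤ D * size x y ^ (2 * m - 1) + B * size x y ^ (2 * m - 1) := by gcongr
        _ = _ := by ring) hε
  obtain ⟨V, hV, hV0, hVi⟩ := exists_homogeneous_of_modeSpan P ha hρ T 0 hτ'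
  refine ⟨_, hU.add hV, fun t ht x y hy => ?_, fun x y hy => ?_⟩
  · rw [heatOp_add P (hU.smooth t ht x y hy) (hV.smooth t ht x y hy), hV0 t ht x y hy, add_zero]
    have h1 := abs_le.1 (hUτ t ht x y hy)
    have h2 := abs_le.1 (hτk t ⟨ht.1.le, ht.2⟩ x y hy)
    have h3 := mul_le_mul_of_nonneg_left (one_le_weight m x y) (half_pos hε).le
    exact abs_le.2 ⟨by linarith [h1.1, h2.2], by linarith [h1.2, h2.1]⟩
  · have h1 := hτf 0 hT0 x y hy
    rw [hVi, ← sub_sub]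
    exact h1

/-! ### The comparison principle -/

theorem growth_le_size {m L : ℕ} (hL : L ≤ 2 * m - 1) {C x y z : ℝ} (hy : 0 ≤ y)
    (h : |z| ≤ C * (1 + |x| ^ L + y ^ L)) : |z| ≤ 3 * |C| * size x y ^ (2 * m - 1) := by
  have h0 := one_le_size x y
  have h1 : |x| ^ L ≤ size x y ^ L := by gcongr; exact abs_le_size x y
  have h2 : y ^ L ≤ size x y ^ L := by gcongr; exact le_size x y
  have h3 : (1 : ℝ) ≤ size x y ^ L := one_le_pow₀ h0
  calc |z| ≤ C * (1 + |x| ^ L + y ^ L) := h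
    _ ≤ |C| * (1 + |x| ^ L + y ^ L) := by gcongr; exact le_abs_self C
    _ ≤ |C| * (3 * size x y ^ L) := by gcongr; linarith
    _ = 3 * |C| * size x y ^ L := by ring
    _ ≤ _ := by gcongr

/-- comparison principle for the forward log-Heston equation.
If `w` is an upper semicontinuous viscosity subsolution and `v` a lower
semicontinuous viscosity supersolution on `[0,T]×ℝ×[0,∞)` with the same
continuous initial data `f` at `t = 0`, and both have polynomial growth in
`(x,y)` uniformly in `t`, then `w ≤ v` everywhere. -/
theorem stmt8 (T a lam sig b c d ρ ϱ : ℝ) (hT : 0 < T) (ha : 0 < a) (hlam : 0 < lam)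
    (hsig : 0 < sig) (hρ : -1 < ρ ∧ ρ < 1)
    (h : ℝ → ℝ → ℝ → ℝ)
    (hh_cont : ContinuousOn (fun p : ℝ × ℝ × ℝ => h p.1 p.2.1 p.2.2)
      (Icc 0 T ×ˢ ((univ : Set ℝ) ×ˢ Ici 0)))
    (hh_growth : ∃ (Ch : ℝ) (Lh : ℕ), ∀ t ∈ Icc 0 T, ∀ x y : ℝ, 0 ≤ y →
      |h t x y| ≤ Ch * (1 + |x| ^ Lh + y ^ Lh))
    (f : ℝ → ℝ → ℝ)
    (hf_cont : ContinuousOn (fun p : ℝ × ℝ => f p.1 p.2) ((univ : Set ℝ) ×ˢ Ici 0))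
    (w v : ℝ → ℝ → ℝ → ℝ)
    (hw_usc : UpperSemicontinuousOn (fun p : ℝ × ℝ × ℝ => w p.1 p.2.1 p.2.2)
      (Icc 0 T ×ˢ ((univ : Set ℝ) ×ˢ Ici 0)))
    (hv_lsc : LowerSemicontinuousOn (fun p : ℝ × ℝ × ℝ => v p.1 p.2.1 p.2.2)
      (Icc 0 T ×ˢ ((univ : Set ℝ) ×ˢ Ici 0)))
    (hw_growth : ∃ (C : ℝ) (L : ℕ), ∀ t ∈ Icc 0 T, ∀ x y : ℝ, 0 ≤ y →
      |w t x y| ≤ C * (1 + |x| ^ L + y ^ L))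
    (hv_growth : ∃ (C : ℝ) (L : ℕ), ∀ t ∈ Icc 0 T, ∀ x y : ℝ, 0 ≤ y →
      |v t x y| ≤ C * (1 + |x| ^ L + y ^ L))
    (hsub : ∀ φ : ℝ → ℝ → ℝ → ℝ,
      ContDiff ℝ 2 (fun p : ℝ × ℝ × ℝ => φ p.1 p.2.1 p.2.2) →
      ∀ t ∈ Ioc 0 T, ∀ x y : ℝ, 0 ≤ y →
      IsLocalMaxOn (fun p : ℝ × ℝ × ℝ => w p.1 p.2.1 p.2.2 - φ p.1 p.2.1 p.2.2)
        (Ioc 0 T ×ˢ ((univ : Set ℝ) ×ˢ Ici 0)) (t, x, y) →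
      pdT φ t x y + logHestonF T a lam sig b c d ρ ϱ h t x y (w t x y)
        (pdX φ t x y) (pdY φ t x y) (pdXX φ t x y) (pdXY φ t x y) (pdYY φ t x y) ≤ 0)
    (hsup : ∀ φ : ℝ → ℝ → ℝ → ℝ,
      ContDiff ℝ 2 (fun p : ℝ × ℝ × ℝ => φ p.1 p.2.1 p.2.2) →
      ∀ t ∈ Ioc 0 T, ∀ x y : ℝ, 0 ≤ y →
      IsLocalMinOn (fun p : ℝ × ℝ × ℝ => v p.1 p.2.1 p.2.2 - φ p.1 p.2.1 p.2.2)
        (Ioc 0 T ×ˢ ((univ : Set ℝ) ×ˢ Ici 0)) (t, x, y) →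
      0 ≤ pdT φ t x y + logHestonF T a lam sig b c d ρ ϱ h t x y (v t x y)
        (pdX φ t x y) (pdY φ t x y) (pdXX φ t x y) (pdXY φ t x y) (pdYY φ t x y))
    (hinit : ∀ x y : ℝ, 0 ≤ y → w 0 x y ≤ f x y ∧ f x y ≤ v 0 x y) :
    ∀ t ∈ Icc 0 T, ∀ x y : ℝ, 0 ≤ y → w t x y ≤ v t x y := by
  obtain ⟨Cw, Lw, hw⟩ := hw_growth
  obtain ⟨Cv, Lv, hv⟩ := hv_growth
  obtain ⟨Ch, Lh, hh⟩ := hh_growth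
  let P : HestonCoeffs := ⟨a, lam, sig, b, c, d, ρ, ϱ⟩
  -- The growth exponents must stay below `2m - 1`, strictly less than the degree of the weight.
  set m : ℕ := Lw + Lv + Lh + 1 with hm
  have hm1 : 1 ≤ m := by omega
  have hT0 : (0 : ℝ) ∈ Icc 0 T := ⟨le_rfl, hT.le⟩
  have hw' : ∀ t ∈ Icc 0 T, ∀ x y, 0 ≤ y → |w t x y| ≤ 3 * |Cw| * size x y ^ (2 * m - 1) :=
    fun t ht x y hy => growth_le_size (by omega) hy (hw t ht x y hy)
  have hv' : ∀ t ∈ Icc 0 T, ∀ x y, 0 ≤ y → |v t x y| ≤ 3 * |Cv| * size x y ^ (2 * m - 1) :=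
    fun t ht x y hy => growth_le_size (by omega) hy (hv t ht x y hy)
  have hrev : ∀ t ∈ Icc 0 T, T - t ∈ Icc 0 T := fun t ht => ⟨by linarith [ht.2], by linarith [ht.1]⟩
  have hk' : ∀ t ∈ Icc 0 T, ∀ x y, 0 ≤ y →
      |h (T - t) x y| ≤ 3 * |Ch| * size x y ^ (2 * m - 1) :=
    fun t ht x y hy => growth_le_size (by omega) hy (hh _ (hrev t ht) x y hy)
  have hk : ContinuousOn (fun q : ℝ × ℝ × ℝ => h (T - q.1) q.2.1 q.2.2) (dom T) :=
    hh_cont.comp (f := fun q : ℝ × ℝ × ℝ => (T - q.1, q.2.1, q.2.2)) (by fun_prop)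
      fun q hq => ⟨hrev _ hq.1, hq.2⟩
  have hf' : ∀ x y, 0 ≤ y → |f x y| ≤ (3 * |Cw| + 3 * |Cv|) * size x y ^ (2 * m - 1) := by
    intro x y hy
    obtain ⟨h1, h2⟩ := hinit x y hy
    have h3 := abs_le.1 (hw' 0 hT0 x y hy)
    have h4 := abs_le.1 (hv' 0 hT0 x y hy)
    have hs : 0 ≤ size x y ^ (2 * m - 1) := pow_nonneg (zero_le_one.trans (one_le_size x y)) _
    have h5 : 0 ≤ 3 * |Cw| * size x y ^ (2 * m - 1) := by positivity
    have h6 : 0 ≤ 3 * |Cv| * size x y ^ (2 * m - 1) := by positivity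
    rw [add_mul]
    exact abs_le.2 ⟨by linarith [h3.1], by linarith [h4.2]⟩
  obtain ⟨K, hK0, hK⟩ := exists_weight_supersolution P m hm1
  -- Both `w ≤ U + error` and `U - error ≤ v` for the same approximate classical solution `U`.
  have hgap : ∀ ε > 0, ∀ t ∈ Icc 0 T, ∀ x y, 0 ≤ y →
      w t x y - v t x y ≤ 2 * (Real.exp (K * t) * weight m x y) * ε := by
    intro ε hε
    obtain ⟨U, hU, hop, h0⟩ := exists_approx_solution P ha.le hρ hT hm1 hk hf_cont
      (by positivity) (by positivity) hk' hf' hε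
    obtain ⟨B, hB⟩ := hU.bdd
    have hUs : ∀ t ∈ Icc 0 T, ∀ x y, 0 ≤ y → |U t x y| ≤ B * size x y ^ (2 * m - 1) := by
      intro t ht x y hy
      have h1 := hB t ht x y hy
      have hB0 : 0 ≤ B := (abs_nonneg _).trans h1
      exact h1.trans (le_mul_of_one_le_right hB0 (one_le_pow₀ (one_le_size x y)))
    have hup := (isSub_of_sub P T h w hsub).le_smooth hm1 hK0 hK hw_usc hU.smooth hU.cont
      (C := 3 * |Cw| + B) (by
        intro t ht x y hy
        rw [add_mul]
        linarith [(abs_le.1 (hw' t ht x y hy)).2, (abs_le.1 (hUs t ht x y hy)).1]) hε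
      (fun t ht x y hy => (abs_le.1 (hop t ht x y hy)).1)
      (fun x y hy => by linarith [(abs_le.1 (h0 x y hy)).2, (hinit x y hy).1])
    have hU' := hU.const_mul (-1)
    have hlow := (isSub_of_sup P T h v hsup).le_smooth hm1 hK0 hK hv_lsc.neg hU'.smooth hU'.cont
      (C := 3 * |Cv| + B) (by
        intro t ht x y hy
        rw [add_mul]
        linarith [(abs_le.1 (hv' t ht x y hy)).1, (abs_le.1 (hUs t ht x y hy)).2]) hε
      (fun t ht x y hy => by
        rw [heatOp_const_mul P (-1) (hU.smooth t ht x y hy)]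
        linarith [(abs_le.1 (hop t ht x y hy)).2])
      (fun x y hy => by linarith [(abs_le.1 (h0 x y hy)).1, (hinit x y hy).2])
    intro t ht x y hy
    linarith [hup t ht x y hy, hlow t ht x y hy]
  intro t ht x y hy
  have hW : 0 < Real.exp (K * t) * weight m x y :=
    mul_pos (Real.exp_pos _) (zero_lt_one.trans_le (one_le_weight m x y))
  refine le_of_forall_pos_le_add fun η hη => ?_
  have h1 := hgap (η / (2 * (Real.exp (K * t) * weight m x y))) (by positivity) t ht x y hy
  rw [mul_div_cancel₀ _ (by positivity)] at h1
  linarith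
end
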